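/- For each 0 < ε₁, ε₂ < 1 the following holds for all sufficiently large K. For d > 0, let G be an n-vertex bipartite (ε₁, ε₂·d)-expander with minimum degree δ(G) ≥ d and n ≥ K·d, and set m := ⌊log⁴(n/d)⌋. Suppose d ≥ m^{200} and G contains no copy of TK_{√d·m}^(1). Then for every W ⊆ V(G) with |W| ≤ d·m^{10}, there exists a (100m³, m²)-adjuster P = (v₁, v₂, F₁, F₂, 2, A) in G − W such that 80m³ ≤ ℓ(P) ≤ 80m³ + 80m. -/

import Mathlib

open scoped BigOperators

/-- The average degree of a graph `G`: `(1/|G|) * sum of degrees`. -/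
noncomputable def avgDeg {V : Type*} (G : SimpleGraph V) : Real :=
  (finsum fun v : V => ((G.neighborSet v).ncard : Real)) / (Nat.card V : Real)

/-- The function `eps(x, eps1, k)` from the definition of robust sublinear expanders. -/
noncomputable def epsFun (eps1 k x : Real) : Real :=
  if x < k / 5 then 0 else eps1 / (Real.log (15 * x / k)) ^ 2

/-- The external neighbourhood of a vertex set `X` in a graph `H`. -/
def extNbr {V : Type*} (H : SimpleGraph V) (X : Set V) : Set V :=
  {w : V | w ∉ X ∧ ∃ v ∈ X, H.Adj v w}

/-- `G` is an `(eps1, k)`-robust-expander. -/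
def IsExpander {V : Type*} (G : SimpleGraph V) (eps1 k : Real) : Prop :=
  ∀ X : Set V, k / 2 ≤ (X.ncard : Real) → (X.ncard : Real) ≤ (Nat.card V : Real) / 2 →
    ∀ F : SimpleGraph V, F ≤ G →
      (F.edgeSet.ncard : Real) ≤ avgDeg G * epsFun eps1 k (X.ncard) * (X.ncard : Real) →
      epsFun eps1 k (X.ncard) * (X.ncard : Real) ≤ ((extNbr (G \ F) X).ncard : Real)

/-- The minimum degree of `G` is at least `d`. -/
def minDegGe {V : Type*} (G : SimpleGraph V) (d : Real) : Prop :=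
  ∀ v : V, d ≤ ((G.neighborSet v).ncard : Real)

/-- `G` is bipartite with parts `A` and its complement. -/
def IsBipartiteWith {V : Type*} (G : SimpleGraph V) (A : Set V) : Prop :=
  ∀ ⦃v w : V⦄, G.Adj v w → (v ∈ A ↔ w ∉ A)

/-- `G` is bipartite. -/
def IsBipartite {V : Type*} (G : SimpleGraph V) : Prop :=
  ∃ A : Set V, IsBipartiteWith G A

/-- `S` is the vertex set of a copy of `TK_t^(l)` in `G`: a balanced subdivision of the
complete graph `K_t` in which each edge is replaced by a path with `l` internal vertices
(i.e. of length `l + 1`); the paths are pairwise internally vertex disjoint. -/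
def IsTK {V : Type*} (G : SimpleGraph V) (t l : Nat) (S : Set V) : Prop :=
  ∃ b : Fin t → V, Function.Injective b ∧
    ∃ P : ∀ i j : Fin t, i < j → G.Walk (b i) (b j),
      (∀ i j (h : i < j), (P i j h).IsPath) ∧
      (∀ i j (h : i < j), (P i j h).length = l + 1) ∧
      (∀ i j (h : i < j), ∀ i' j' (h' : i' < j'), (i, j) ≠ (i', j') →
        ∀ v : V, v ∈ (P i j h).support → v ∈ (P i' j' h').support →
          (v = b i ∨ v = b j) ∧ (v = b i' ∨ v = b j')) ∧
      S = {v : V | ∃ (i j : Fin t) (h : i < j), v ∈ (P i j h).support}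

/-- `G` contains a copy of `TK_t^(l)`. -/
def HasTK {V : Type*} (G : SimpleGraph V) (t l : Nat) : Prop :=
  ∃ S : Set V, IsTK G t l S

/-- An `(h₀, h₁, L)`-unit in `G`: a core vertex, `h₀` pairwise vertex disjoint `h₁`-stars
with centres `centre i` and leaves `leaf i j`, together with core-centre paths, pairwise
internally vertex disjoint and disjoint from the stars, all of the same length `< L`. -/
structure UnitIn {V : Type*} (G : SimpleGraph V) (h₀ h₁ L : Nat) where
  core : V
  centre : Fin h₀ → V
  leaf : Fin h₀ → Fin h₁ → V
  path : ∀ i : Fin h₀, G.Walk core (centre i)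
  pathLen : Nat
  pathLen_pos : 0 < pathLen
  pathLen_lt : pathLen < L
  path_isPath : ∀ i, (path i).IsPath
  path_length : ∀ i, (path i).length = pathLen
  star_adj : ∀ i j, G.Adj (centre i) (leaf i j)
  centre_inj : Function.Injective centre
  leaf_inj : Function.Injective fun p : Fin h₀ × Fin h₁ => leaf p.1 p.2
  centre_ne_leaf : ∀ i j k, centre i ≠ leaf j k
  paths_disjoint : ∀ i j, i ≠ j →
    ∀ x : V, x ∈ (path i).support → x ∈ (path j).support → x = core
  leaf_notin_path : ∀ i j k, leaf j k ∉ (path i).support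

namespace UnitIn

variable {V : Type*} {G : SimpleGraph V} {h₀ h₁ L : Nat}

/-- The interior of a unit: the union of the vertex sets of its core-centre paths. -/
def interior (U : UnitIn G h₀ h₁ L) : Set V :=
  {x : V | ∃ i, x ∈ (U.path i).support}

/-- The vertex set of a unit. -/
def verts (U : UnitIn G h₀ h₁ L) : Set V :=
  U.interior ∪ Set.range fun p : Fin h₀ × Fin h₁ => U.leaf p.1 p.2

/-- The boundary of a unit. -/
def boundary (U : UnitIn G h₀ h₁ L) : Set V :=
  U.verts \ U.interior

end UnitIn

/-- An `(l, k)`-adjuster in `G` (relative to `d` and `m`): two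
`(z·√d·m⁶, √d·m²², 10m)`-units `F₁`, `F₂` with disjoint interiors, `z ∈ [1,3]`, a vertex
set `A` of size at most `2l` disjoint from the units, and `k + 1` paths between the two
core vertices inside `A ∪ {cores}` whose lengths are `l', l' + 2, …, l' + 2k` with `l' ≤ l`. -/
structure AdjusterIn {V : Type*} (G : SimpleGraph V) (d : Real) (m l k : Nat) where
  z : Real
  z_ge : 1 ≤ z
  z_le : z ≤ 3
  F₁ : UnitIn G ⌈z * Real.sqrt d * (m : Real) ^ 6⌉₊ ⌈Real.sqrt d * (m : Real) ^ 22⌉₊ (10 * m)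
  F₂ : UnitIn G ⌈z * Real.sqrt d * (m : Real) ^ 6⌉₊ ⌈Real.sqrt d * (m : Real) ^ 22⌉₊ (10 * m)
  int_disj : F₁.interior ∩ F₂.interior = ∅
  A : Set V
  A_card : A.ncard ≤ 2 * l
  A_disj : A ∩ (F₁.verts ∪ F₂.verts) = ∅
  l' : Nat
  l'_le : l' ≤ l
  paths : Fin (k + 1) → G.Walk F₁.core F₂.core
  paths_isPath : ∀ i, (paths i).IsPath
  paths_length : ∀ i : Fin (k + 1), (paths i).length = l' + 2 * (i : Nat)
  paths_support : ∀ i, ∀ x ∈ (paths i).support, x ∈ A ∪ {F₁.core, F₂.core}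

namespace AdjusterIn

variable {V : Type*} {G : SimpleGraph V} {d : Real} {m l k : Nat}

/-- The length `ℓ(P) = l' + 2k` of an adjuster. -/
def len (P : AdjusterIn G d m l k) : Nat := P.l' + 2 * k

/-- The perimeter `p(P) = A ∪ int(F₁) ∪ int(F₂)` of an adjuster. -/
def perimeter (P : AdjusterIn G d m l k) : Set V :=
  P.A ∪ P.F₁.interior ∪ P.F₂.interior

/-- The full vertex set of an adjuster. -/
def verts (P : AdjusterIn G d m l k) : Set V :=
  P.A ∪ P.F₁.verts ∪ P.F₂.verts

end AdjusterIn


/-!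
If many vertices had at least `d / 2` neighbours in a small set `W`, the common neighbourhoods of
pairs in `W` would contain a large 1-subdivided clique.  Hence almost every vertex keeps half of its
degree outside a small set, and sublinear expansion makes its balls grow outside that set until they
fill half of the graph.  Two such robust vertices are therefore joined by a short path that avoids
any small set.

Two short paths of the same parity between robust vertices form an even cycle, which contains paths
of lengths `l` and `l + 2` between two suitable vertices; chaining `m ^ 2` such cycles and
lengthening the result gives paths of all the required lengths between any two robust vertices.  For
the units, connect `m ^ 36` stars with about `d / 2` leaves to many stars with about `√d * m ^ 23`
leaves through their leaves: some centre of the first kind must have a large fan of paths to centres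
of the second kind, as otherwise the vertices of maximal fans would form a small set to be avoided
by yet another path.  A unit built with some room to spare survives the deletion of the paths that
join it to the other one.
-/

open Finset in
lemma exists_erase_sum_sum_le {α : Type*} [DecidableEq α] {w : α → α → ℝ} (hdiag : ∀ a, w a a = 0)
    {S : Finset α} (hS : S.Nonempty) :
    ∃ a ∈ S, #S * ∑ x ∈ S.erase a, ∑ y ∈ S.erase a, w x y
      ≤ ((#S : ℝ) - 2) * ∑ x ∈ S, ∑ y ∈ S, w x y := by
  have erase_eq : ∀ a ∈ S, ∑ x ∈ S.erase a, ∑ y ∈ S.erase a, w x y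
      = (∑ x ∈ S, ∑ y ∈ S, w x y) - (∑ x ∈ S, w x a) - ∑ y ∈ S, w a y := by
    intro a ha
    simp only [sum_erase_eq_sub ha, sum_sub_distrib, hdiag]
    ring
  have total : ∑ a ∈ S, ∑ x ∈ S.erase a, ∑ y ∈ S.erase a, w x y
      = ((#S : ℝ) - 2) * ∑ x ∈ S, ∑ y ∈ S, w x y := by
    rw [sum_congr rfl erase_eq]
    simp only [sum_sub_distrib, sum_const, nsmul_eq_mul]
    rw [sum_comm (s := S) (t := S) (f := fun a x => w x a)]
    ring
  by_contra! hcon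
  have hlt := sum_lt_sum_of_nonempty hS hcon
  rw [← mul_sum, ← mul_sum, total, sum_const, nsmul_eq_mul] at hlt
  exact hlt.not_ge (le_of_eq (by ring))

open Finset in
lemma exists_subset_card_eq_sum_sum_le {α : Type*} {w : α → α → ℝ}
    (hw : ∀ a b, 0 ≤ w a b) (hdiag : ∀ a, w a a = 0) {t : ℕ} (ht : 0 < t) (S : Finset α)
    (htS : t ≤ #S) :
    ∃ T ⊆ S, #T = t ∧
      (∑ a ∈ T, ∑ b ∈ T, w a b) * (#S : ℝ) ^ 2 ≤ (t : ℝ) ^ 2 * ∑ a ∈ S, ∑ b ∈ S, w a b := by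
  classical
  induction S using Finset.strongInduction with
  | H S ih =>
    obtain rfl | hlt := htS.eq_or_lt
    · exact ⟨S, Subset.rfl, rfl, (mul_comm _ _).le⟩
    have hS : S.Nonempty := card_pos.1 (ht.trans hlt)
    obtain ⟨a, ha, hle⟩ := exists_erase_sum_sum_le hdiag hS
    have hcard : (#(S.erase a) : ℝ) = #S - 1 := by
      rw [← card_erase_add_one ha]
      push_cast
      ring
    obtain ⟨T, hTS, hT, hTle⟩ := ih _ (erase_ssubset ha)
      (by rw [card_erase_of_mem ha]; omega)
    refine ⟨T, hTS.trans (erase_subset _ _), hT, ?_⟩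
    have hS1 : (1 : ℝ) < #S := by exact_mod_cast (Nat.succ_le_of_lt ht).trans_lt hlt
    have hΦ : 0 ≤ ∑ x ∈ S, ∑ y ∈ S, w x y := sum_nonneg fun a _ => sum_nonneg fun b _ => hw a b
    rw [hcard] at hTle
    generalize ∑ x ∈ S.erase a, ∑ y ∈ S.erase a, w x y = Φ' at hle hTle
    generalize ∑ x ∈ S, ∑ y ∈ S, w x y = Φ at hle hΦ
    generalize ∑ x ∈ T, ∑ y ∈ T, w x y = Ψ at hTle
    generalize (#S : ℝ) = s at *
    have hΦ' : Φ' * s ^ 2 ≤ (s - 1) ^ 2 * Φ := by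
      calc Φ' * s ^ 2 = s * (s * Φ') := by ring
        _ ≤ s * ((s - 2) * Φ) := by gcongr
        _ ≤ (s - 1) ^ 2 * Φ := by linarith
    refine le_of_mul_le_mul_left ?_ (pow_pos (sub_pos.2 hS1) 2)
    calc (s - 1) ^ 2 * (Ψ * s ^ 2) = Ψ * (s - 1) ^ 2 * s ^ 2 := by ring
      _ ≤ t ^ 2 * Φ' * s ^ 2 := by gcongr
      _ = t ^ 2 * (Φ' * s ^ 2) := by ring
      _ ≤ t ^ 2 * ((s - 1) ^ 2 * Φ) := by gcongr
      _ = (s - 1) ^ 2 * (t ^ 2 * Φ) := by ring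

open Finset in
lemma exists_injective_mem_of_sum_inv_card_le_one {ι α : Type*} [Fintype ι]
    {fam : ι → Finset α} (hne : ∀ i, (fam i).Nonempty) (hsum : ∑ i, (#(fam i) : ℝ)⁻¹ ≤ 1) :
    ∃ f : ι → α, Function.Injective f ∧ ∀ i, f i ∈ fam i := by
  classical
  refine (Finset.all_card_le_biUnion_card_iff_exists_injective fam).1 fun s => ?_
  by_contra! hlt
  have hs : s.Nonempty := card_pos.1 (Nat.zero_lt_of_lt hlt)
  have hs0 : (#s : ℝ) ≠ 0 := by exact_mod_cast hs.card_pos.ne'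
  have hinv : ∀ i ∈ s, (#s : ℝ)⁻¹ < (#(fam i) : ℝ)⁻¹ := fun i hi =>
    inv_strictAnti₀ (by exact_mod_cast (hne i).card_pos)
      (by exact_mod_cast (card_le_card (subset_biUnion_of_mem fam hi)).trans_lt hlt)
  have hlarge : 1 < ∑ i ∈ s, (#(fam i) : ℝ)⁻¹ := by
    simpa only [sum_const, nsmul_eq_mul, mul_inv_cancel₀ hs0] using sum_lt_sum_of_nonempty hs hinv
  have hsub : ∑ i ∈ s, (#(fam i) : ℝ)⁻¹ ≤ ∑ i, (#(fam i) : ℝ)⁻¹ :=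
    sum_le_sum_of_subset_of_nonneg (subset_univ s) fun i _ _ => by positivity
  linarith

section OneSubdivision

variable {V : Type*} {G : SimpleGraph V}

lemma hasTK_one_of_injective {t : ℕ} {b : Fin t → V} (hb : Function.Injective b)
    {f : {p : Fin t × Fin t // p.1 < p.2} → V} (hf : Function.Injective f)
    (hadj : ∀ p, G.Adj (b p.1.1) (f p) ∧ G.Adj (f p) (b p.1.2)) (hbf : ∀ i p, b i ≠ f p) :
    HasTK G t 1 := by
  refine ⟨_, b, hb, fun i j h =>
    .cons (hadj ⟨(i, j), h⟩).1 (.cons (hadj ⟨(i, j), h⟩).2 .nil), ?_, ?_, ?_, rfl⟩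
  · intro i j h
    have hij : b i ≠ b j := hb.ne h.ne
    have hi := hbf i ⟨(i, j), h⟩
    have hj := (hbf j ⟨(i, j), h⟩).symm
    simp [SimpleGraph.Walk.cons_isPath_iff, hij, hi, hj]
  · intro i j h
    rfl
  · intro i j h i' j' h' hne v hv hv'
    have hff : f ⟨(i, j), h⟩ ≠ f ⟨(i', j'), h'⟩ := fun hh => hne (congrArg Subtype.val (hf hh))
    have hmem : ∀ i j (h : i < j), v = b i ∨ v = f ⟨(i, j), h⟩ ∨ v = b j →
        (v = b i ∨ v = b j) ∨ v = f ⟨(i, j), h⟩ := by tauto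
    simp only [SimpleGraph.Walk.support_cons, SimpleGraph.Walk.support_nil, List.mem_cons,
      List.not_mem_nil, or_false] at hv hv'
    have hoff : ∀ i j p, (v = b i ∨ v = b j) → v ≠ f p := by
      rintro i j p (rfl | rfl) <;> exact hbf _ p
    rcases hmem i j h hv with hv | hv <;> rcases hmem i' j' h' hv' with hv' | hv'
    · exact ⟨hv, hv'⟩
    · exact absurd hv' (hoff _ _ _ hv)
    · exact absurd hv (hoff _ _ _ hv')
    · exact absurd (hv.symm.trans hv') hff

/-- The reciprocal of the number of common neighbours of two distinct vertices in `X`, and `0` on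
the diagonal.  If it sums to at most `1` over the pairs in `T`, then distinct common neighbours can
be chosen for all these pairs. -/
noncomputable def codegWeight (G : SimpleGraph V) [DecidableEq V] [DecidableRel G.Adj]
    (X : Finset V) (a b : V) : ℝ :=
  if a = b then 0 else ((X.filter fun x => G.Adj x a ∧ G.Adj x b).card : ℝ)⁻¹

variable [DecidableRel G.Adj]

lemma codegWeight_nonneg [DecidableEq V] (X : Finset V) (a b : V) : 0 ≤ codegWeight G X a b := by
  unfold codegWeight
  positivity

open Finset in
lemma hasTK_one_of_sum_codegWeight_le_one [DecidableEq V] {T X : Finset V}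
    (hTX : Disjoint T X) {x : V} (hx : x ∈ X) (hxT : ∀ a ∈ T, G.Adj x a)
    (hsum : ∑ a ∈ T, ∑ b ∈ T, codegWeight G X a b ≤ 1) : HasTK G #T 1 := by
  let b : Fin #T → V := fun i => T.equivFin.symm i
  have hb : Function.Injective b := Subtype.val_injective.comp T.equivFin.symm.injective
  have hbT : ∀ i, b i ∈ T := fun i => (T.equivFin.symm i).2
  let fam : {p : Fin #T × Fin #T // p.1 < p.2} → Finset V := fun p =>
    X.filter fun x => G.Adj x (b p.1.1) ∧ G.Adj x (b p.1.2)
  have hne : ∀ p, (fam p).Nonempty := fun p =>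
    ⟨x, mem_filter.2 ⟨hx, hxT _ (hbT _), hxT _ (hbT _)⟩⟩
  have hfam : ∑ p, (#(fam p) : ℝ)⁻¹ ≤ 1 := by
    calc ∑ p, (#(fam p) : ℝ)⁻¹
        = ∑ p : {p : Fin #T × Fin #T // p.1 < p.2}, codegWeight G X (b p.1.1) (b p.1.2) :=
          sum_congr rfl fun p _ => (if_neg (hb.ne p.2.ne)).symm
      _ = ∑ p : Fin #T × Fin #T with p.1 < p.2, codegWeight G X (b p.1) (b p.2) :=
          (sum_subtype _ (by simp)
            fun p : Fin #T × Fin #T => codegWeight G X (b p.1) (b p.2)).symm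
      _ ≤ ∑ p : Fin #T × Fin #T, codegWeight G X (b p.1) (b p.2) :=
          sum_le_sum_of_subset_of_nonneg (filter_subset _ _) fun _ _ _ => codegWeight_nonneg _ _ _
      _ = ∑ i, ∑ j, codegWeight G X (b i) (b j) := Fintype.sum_prod_type _
      _ = ∑ a ∈ T, ∑ b ∈ T, codegWeight G X a b := by
          rw [← sum_coe_sort T, ← T.equivFin.symm.sum_comp]
          refine sum_congr rfl fun i _ => ?_
          rw [← sum_coe_sort T, ← T.equivFin.symm.sum_comp]
      _ ≤ 1 := hsum
  obtain ⟨f, hf, hmem⟩ := exists_injective_mem_of_sum_inv_card_le_one hne hfam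
  exact hasTK_one_of_injective hb hf
    (fun p => ⟨(mem_filter.1 (hmem p)).2.1.symm, (mem_filter.1 (hmem p)).2.2⟩)
    (fun i p h => disjoint_left.1 hTX (hbT i) (h ▸ (mem_filter.1 (hmem p)).1))

open Finset in
lemma exists_card_mul_sum_codegWeight_le [DecidableEq V] {X : Finset V} (hX : X.Nonempty)
    (W : Finset V) :
    ∃ x ∈ X, #X * ∑ a ∈ W with G.Adj x a, ∑ b ∈ W with G.Adj x b, codegWeight G X a b
      ≤ (#W : ℝ) ^ 2 := by
  have hpair : ∀ a b, ∑ x ∈ X with G.Adj x a ∧ G.Adj x b, codegWeight G X a b ≤ 1 := by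
    intro a b
    rw [sum_const, nsmul_eq_mul, codegWeight]
    split_ifs
    · simp
    · exact mul_inv_le_one
  have total : ∑ x ∈ X, ∑ a ∈ W with G.Adj x a, ∑ b ∈ W with G.Adj x b, codegWeight G X a b
      ≤ (#W : ℝ) ^ 2 := by
    calc ∑ x ∈ X, ∑ a ∈ W with G.Adj x a, ∑ b ∈ W with G.Adj x b, codegWeight G X a b
        = ∑ a ∈ W, ∑ b ∈ W, ∑ x ∈ X with G.Adj x a ∧ G.Adj x b, codegWeight G X a b := by
          simp only [sum_filter, ite_and]
          rw [sum_comm]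
          refine sum_congr rfl fun a _ => ?_
          rw [sum_comm (s := W) (t := X)]
          refine sum_congr rfl fun x _ => ?_
          split_ifs <;> simp
      _ ≤ ∑ a ∈ W, ∑ b ∈ W, 1 := sum_le_sum fun a _ => sum_le_sum fun b _ => hpair a b
      _ = (#W : ℝ) ^ 2 := by simp [sq]
  obtain ⟨x, hx, hle⟩ := exists_le_of_sum_le hX
    (f := fun x => #X * ∑ a ∈ W with G.Adj x a, ∑ b ∈ W with G.Adj x b, codegWeight G X a b)
    (g := fun _ => (#W : ℝ) ^ 2) (by rw [← mul_sum, sum_const, nsmul_eq_mul]; gcongr)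
  exact ⟨x, hx, hle⟩

open Finset in
lemma hasTK_one_of_le_card_filter_adj {X W : Finset V} (hX : X.Nonempty) (hXW : Disjoint X W)
    {t k : ℕ} (ht : 0 < t) (htk : t ≤ k) (hk : ∀ x ∈ X, k ≤ #{a ∈ W | G.Adj x a})
    (hcard : (t : ℝ) ^ 2 * (#W : ℝ) ^ 2 ≤ #X * (k : ℝ) ^ 2) : HasTK G t 1 := by
  classical
  obtain ⟨x, hx, hle⟩ := exists_card_mul_sum_codegWeight_le (G := G) hX W
  obtain ⟨T, hTS, rfl, hT⟩ := exists_subset_card_eq_sum_sum_le (codegWeight_nonneg (G := G) X)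
    (fun a => if_pos rfl) ht {a ∈ W | G.Adj x a} (htk.trans (hk x hx))
  refine hasTK_one_of_sum_codegWeight_le_one (G := G) ?_ hx
    (fun a ha => (mem_filter.1 (hTS ha)).2) ?_
  · exact (hXW.mono_right (hTS.trans (filter_subset _ _))).symm
  have hk0 : (0 : ℝ) < k := by exact_mod_cast ht.trans_le htk
  have hkx : (k : ℝ) ≤ #{a ∈ W | G.Adj x a} := by exact_mod_cast hk x hx
  have hX0 : (0 : ℝ) < #X := by exact_mod_cast hX.card_pos
  have hpos : 0 < (#X : ℝ) * (#{a ∈ W | G.Adj x a} : ℝ) ^ 2 :=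
    mul_pos hX0 (pow_pos (hk0.trans_le hkx) 2)
  refine le_of_mul_le_mul_right ?_ hpos
  generalize ∑ a ∈ T, ∑ b ∈ T, codegWeight G X a b = Ψ at hT
  generalize (#{a ∈ W | G.Adj x a} : ℝ) = s at *
  generalize ∑ a ∈ W with G.Adj x a, ∑ b ∈ W with G.Adj x b, codegWeight G X a b = Φ at *
  calc Ψ * (#X * s ^ 2) = #X * (Ψ * s ^ 2) := by ring
    _ ≤ #X * (#T ^ 2 * Φ) := by gcongr
    _ = #T ^ 2 * (#X * Φ) := by ring
    _ ≤ #T ^ 2 * #W ^ 2 := by gcongr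
    _ ≤ #X * k ^ 2 := hcard
    _ ≤ 1 * (#X * s ^ 2) := by rw [one_mul]; gcongr

end OneSubdivision

section BallAvoiding

variable {V : Type*} {G : SimpleGraph V}

/-- The set of vertices that can be reached from `A` by a walk of length at most `j` avoiding
`W`. -/
def ballAvoiding (G : SimpleGraph V) (W A : Set V) (j : ℕ) : Set V :=
  {v | ∃ a ∈ A, ∃ p : G.Walk a v, p.length ≤ j ∧ ∀ x ∈ p.support, x ∉ W}

lemma subset_ballAvoiding {W A : Set V} (hAW : Disjoint A W) (j : ℕ) : A ⊆ ballAvoiding G W A j :=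
  fun a ha => ⟨a, ha, .nil, Nat.zero_le j, by simpa using Set.disjoint_left.1 hAW ha⟩

lemma ballAvoiding_mono (W A : Set V) {i j : ℕ} (hij : i ≤ j) :
    ballAvoiding G W A i ⊆ ballAvoiding G W A j :=
  fun _ ⟨a, ha, p, hp, hpW⟩ => ⟨a, ha, p, hp.trans hij, hpW⟩

lemma ballAvoiding_anti {W W' : Set V} (hW : W ⊆ W') (A : Set V) (j : ℕ) :
    ballAvoiding G W' A j ⊆ ballAvoiding G W A j :=
  fun _ ⟨a, ha, p, hp, hpW⟩ => ⟨a, ha, p, hp, fun x hx h => hpW x hx (hW h)⟩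

lemma disjoint_ballAvoiding (W A : Set V) (j : ℕ) : Disjoint (ballAvoiding G W A j) W :=
  Set.disjoint_left.2 fun _ ⟨_, _, p, _, hpW⟩ => hpW _ p.end_mem_support

lemma mem_ballAvoiding_succ {W A : Set V} {j : ℕ} {u v : V} (hu : u ∈ ballAvoiding G W A j)
    (huv : G.Adj u v) (hv : v ∉ W) : v ∈ ballAvoiding G W A (j + 1) := by
  obtain ⟨a, ha, p, hp, hpW⟩ := hu
  refine ⟨a, ha, p.concat huv, by simpa using hp, fun x hx => ?_⟩
  rw [SimpleGraph.Walk.support_concat, List.mem_append, List.mem_singleton] at hx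
  rcases hx with hx | rfl
  exacts [hpW x hx, hv]

lemma ncard_extNbr_ballAvoiding_add_le [Finite V] (W A : Set V) (j : ℕ) :
    (extNbr G (ballAvoiding G W A j)).ncard + (ballAvoiding G W A j).ncard
      ≤ (ballAvoiding G W A (j + 1)).ncard + W.ncard := by
  have hsub : extNbr G (ballAvoiding G W A j) ⊆
      (ballAvoiding G W A (j + 1) \ ballAvoiding G W A j) ∪ W := by
    rintro v ⟨hv, u, hu, huv⟩
    by_cases hvW : v ∈ W
    exacts [Or.inr hvW, Or.inl ⟨mem_ballAvoiding_succ hu huv hvW, hv⟩]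
  have hdiff := Set.ncard_sdiff_add_ncard_of_subset
    (ballAvoiding_mono (G := G) W A (Nat.le_add_right j 1))
  have hle := (Set.ncard_le_ncard hsub).trans (Set.ncard_union_le _ _)
  omega

lemma exists_walk_of_mem_ballAvoiding_inter {W A B : Set V} {i j : ℕ} {x : V}
    (hA : x ∈ ballAvoiding G W A i) (hB : x ∈ ballAvoiding G W B j) :
    ∃ a ∈ A, ∃ b ∈ B, ∃ p : G.Walk a b, p.length ≤ i + j ∧ ∀ x ∈ p.support, x ∉ W := by
  obtain ⟨a, ha, p, hp, hpW⟩ := hA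
  obtain ⟨b, hb, q, hq, hqW⟩ := hB
  refine ⟨a, ha, b, hb, p.append q.reverse, ?_, fun y hy => ?_⟩
  · rw [SimpleGraph.Walk.length_append, SimpleGraph.Walk.length_reverse]
    exact add_le_add hp hq
  · rw [SimpleGraph.Walk.mem_support_append_iff, SimpleGraph.Walk.support_reverse,
      List.mem_reverse] at hy
    exact hy.elim (hpW y) (hqW y)

end BallAvoiding

/-- The regime in which the adjuster is built: `G` is a bipartite graph of minimum degree at least
`d` without a large 1-subdivided clique, in which every set of at least `d * m` and at most half of
the vertices expands by the factor `η`, where `η` is of larger order than `1 / m` and `m` rounds of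
expansion exhaust the graph. -/
structure ExpansionSetting {V : Type*} (G : SimpleGraph V) (d η : ℝ) (m : ℕ) : Prop where
  le_m : 1000 ≤ m
  pow_le : (m : ℝ) ^ 200 ≤ d
  le_card : d * (m : ℝ) ^ 300 ≤ (Nat.card V : ℝ)
  eight_le : 8 ≤ η * m
  card_le : (Nat.card V : ℝ) ≤ d * (1 + η / 4) ^ (m - 1)
  expands : ∀ X : Set V, d * m ≤ (X.ncard : ℝ) → (X.ncard : ℝ) ≤ (Nat.card V : ℝ) / 2 →
    η * X.ncard ≤ ((extNbr G X).ncard : ℝ)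
  minDeg : minDegGe G d
  bipartite : IsBipartite G
  not_hasTK : ¬ HasTK G ⌈√d * m⌉₊ 1

namespace ExpansionSetting

variable {V : Type*} {G : SimpleGraph V} {d η : ℝ} {m : ℕ}

lemma thousand_le (hS : ExpansionSetting G d η m) : (1000 : ℝ) ≤ m := by exact_mod_cast hS.le_m

lemma one_le (hS : ExpansionSetting G d η m) : (1 : ℝ) ≤ m := by linarith [hS.thousand_le]

lemma d_pos (hS : ExpansionSetting G d η m) : 0 < d :=
  (pow_pos (zero_lt_one.trans_le hS.one_le) 200).trans_le hS.pow_le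

lemma η_pos (hS : ExpansionSetting G d η m) : 0 < η :=
  pos_of_mul_pos_left (by linarith [hS.eight_le]) (zero_le_one.trans hS.one_le)

lemma mul_pow_le (hS : ExpansionSetting G d η m) {c : ℝ} (hc : 0 ≤ c) {a b : ℕ} (hab : a < b) :
    1000 * (c * (m : ℝ) ^ a) ≤ c * (m : ℝ) ^ b := by
  calc 1000 * (c * (m : ℝ) ^ a) = c * (m : ℝ) ^ a * 1000 := by ring
    _ ≤ c * (m : ℝ) ^ a * m := by gcongr; exact hS.thousand_le
    _ = c * (m : ℝ) ^ (a + 1) := by ring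
    _ ≤ c * (m : ℝ) ^ b := by
      gcongr
      exacts [hS.one_le, hab]

lemma pow_le_d (hS : ExpansionSetting G d η m) {a : ℕ} (ha : a ≤ 200) : (m : ℝ) ^ a ≤ d :=
  (pow_le_pow_right₀ hS.one_le ha).trans hS.pow_le

lemma pow_le_sqrt (hS : ExpansionSetting G d η m) {a : ℕ} (ha : a ≤ 100) : (m : ℝ) ^ a ≤ √d :=
  Real.le_sqrt_of_sq_le (by rw [← pow_mul]; exact hS.pow_le_d (by omega))

lemma sqrt_mul_pow_le (hS : ExpansionSetting G d η m) {a : ℕ} (ha : a ≤ 100) :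
    √d * (m : ℝ) ^ a ≤ d := by
  calc √d * (m : ℝ) ^ a ≤ √d * √d := by gcongr; exact hS.pow_le_sqrt ha
    _ = d := Real.mul_self_sqrt hS.d_pos.le

lemma le_mul_pow (hS : ExpansionSetting G d η m) (a : ℕ) : d ≤ d * (m : ℝ) ^ a :=
  le_mul_of_one_le_right hS.d_pos.le (one_le_pow₀ hS.one_le)

lemma lt_quarter_mul_of_mul_le (hS : ExpansionSetting G d η m) {s x : ℝ} (hx : 0 < x)
    (hs : s * m ≤ x) : s < η / 4 * x := by
  refine lt_of_mul_lt_mul_right ?_ (zero_le_one.trans hS.one_le)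
  calc s * m ≤ x := hs
    _ < 2 * x := by linarith
    _ ≤ η * m / 4 * x := by
        gcongr
        linarith [hS.eight_le]
    _ = η / 4 * x * m := by ring

lemma ncard_many_neighbors_le [Finite V] (hS : ExpansionSetting G d η m) {c : ℕ} {W : Set V}
    (hW : (W.ncard : ℝ) ≤ d * (m : ℝ) ^ c) :
    ({x | x ∉ W ∧ d / 2 ≤ ((G.neighborSet x ∩ W).ncard : ℝ)}.ncard : ℝ)
      ≤ d * (m : ℝ) ^ (2 * c + 3) := by
  classical
  have := Fintype.ofFinite V
  by_contra! hlarge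
  have hd := hS.d_pos
  have hm := hS.thousand_le
  have hsq : √d ^ 2 = d := Real.sq_sqrt hd.le
  have hr : 1 ≤ √d * m := one_le_mul_of_one_le_of_one_le
    (by simpa using hS.pow_le_sqrt (Nat.zero_le 100)) hS.one_le
  have hrm : 2 * (√d * m) ≤ d := by
    have h := hS.mul_pow_le (Real.sqrt_nonneg d) one_lt_two
    have h' := hS.sqrt_mul_pow_le (a := 2) (by norm_num)
    rw [pow_one] at h
    linarith
  refine hS.not_hasTK (hasTK_one_of_le_card_filter_adj (k := ⌈d / 2⌉₊) (W := W.toFinset)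
    (X := {x | x ∉ W ∧ d / 2 ≤ ((G.neighborSet x ∩ W).ncard : ℝ)}.toFinset) ?_ ?_
    (Nat.ceil_pos.2 (by linarith)) (Nat.ceil_mono (by linarith)) ?_ ?_)
  · rw [Set.toFinset_nonempty, ← Set.ncard_pos]
    exact_mod_cast (mul_nonneg hd.le (by positivity)).trans_lt hlarge
  · exact Set.disjoint_toFinset.2 (Set.disjoint_left.2 fun x hx => hx.1)
  · intro x hx
    have hfilter : (W.toFinset.filter fun a => G.Adj x a) = (G.neighborSet x ∩ W).toFinset := by
      ext a
      simp [and_comm]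
    rw [hfilter, ← Set.ncard_eq_toFinset_card', Nat.ceil_le]
    exact (Set.mem_toFinset.1 hx).2
  · rw [← Set.ncard_eq_toFinset_card', ← Set.ncard_eq_toFinset_card']
    have ht : (⌈√d * m⌉₊ : ℝ) ≤ 2 * (√d * m) :=
      (Nat.ceil_lt_add_one (zero_le_one.trans hr)).le.trans (by linarith)
    calc (⌈√d * m⌉₊ : ℝ) ^ 2 * (W.ncard : ℝ) ^ 2
        ≤ (2 * (√d * m)) ^ 2 * (d * (m : ℝ) ^ c) ^ 2 := by gcongr
      _ = 16 * (d * (m : ℝ) ^ (2 * c + 2)) * (d / 2) ^ 2 := by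
          rw [mul_pow, mul_pow √d, hsq]
          ring
      _ ≤ d * (m : ℝ) ^ (2 * c + 3) * (d / 2) ^ 2 := by
          have h := hS.mul_pow_le hd.le (show 2 * c + 2 < 2 * c + 3 by omega)
          have : 0 ≤ d * (m : ℝ) ^ (2 * c + 2) := by positivity
          exact mul_le_mul_of_nonneg_right (by linarith) (sq_nonneg _)
      _ ≤ _ := by
          gcongr
          exact Nat.le_ceil _

section Connect

variable [Finite V]

lemma mul_ncard_ballAvoiding_le_succ (hS : ExpansionSetting G d η m) {A W : Set V}
    (hAW : Disjoint A W) (hA : d * m ≤ (A.ncard : ℝ)) (hW : (W.ncard : ℝ) * m ≤ 4 * A.ncard)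
    {j : ℕ} (hj : ((ballAvoiding G W A j).ncard : ℝ) ≤ (Nat.card V : ℝ) / 2) :
    (1 + η / 2) * ((ballAvoiding G W A j).ncard : ℝ)
      ≤ ((ballAvoiding G W A (j + 1)).ncard : ℝ) := by
  have hAb : (A.ncard : ℝ) ≤ (ballAvoiding G W A j).ncard := by
    exact_mod_cast Set.ncard_le_ncard (subset_ballAvoiding hAW j)
  have hext := hS.expands _ (hA.trans hAb) hj
  have hsucc : ((extNbr G (ballAvoiding G W A j)).ncard : ℝ) + (ballAvoiding G W A j).ncard
      ≤ (ballAvoiding G W A (j + 1)).ncard + W.ncard := by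
    exact_mod_cast ncard_extNbr_ballAvoiding_add_le W A j
  have hWη : (W.ncard : ℝ) ≤ η / 2 * A.ncard := by
    refine le_of_mul_le_mul_right ?_ (zero_lt_one.trans_le hS.one_le)
    calc (W.ncard : ℝ) * m ≤ 4 * A.ncard := hW
      _ ≤ η * m / 2 * A.ncard := by
          gcongr
          linarith [hS.eight_le]
      _ = η / 2 * A.ncard * m := by ring
  have hη : η / 2 * A.ncard ≤ η / 2 * (ballAvoiding G W A j).ncard := by
    have := hS.η_pos
    gcongr
  linarith

lemma half_card_lt_ncard_ballAvoiding (hS : ExpansionSetting G d η m) {A W : Set V}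
    (hAW : Disjoint A W) (hA : d * m ≤ (A.ncard : ℝ)) (hW : (W.ncard : ℝ) * m ≤ 4 * A.ncard) :
    (Nat.card V : ℝ) / 2 < ((ballAvoiding G W A m).ncard : ℝ) := by
  by_contra! hsmall
  have hη := hS.η_pos
  have hd := hS.d_pos
  have growth := geom_le (u := fun j => ((ballAvoiding G W A j).ncard : ℝ)) (c := 1 + η / 2)
    (by linarith) m fun j hj => hS.mul_ncard_ballAvoiding_le_succ hAW hA hW (hsmall.trans' (by
      exact_mod_cast Set.ncard_le_ncard (ballAvoiding_mono W A hj.le)))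
  have hA0 : (A.ncard : ℝ) ≤ (ballAvoiding G W A 0).ncard := by
    exact_mod_cast Set.ncard_le_ncard (subset_ballAvoiding hAW 0)
  have hall : (Nat.card V : ℝ) ≤ (ballAvoiding G W A m).ncard := by
    calc (Nat.card V : ℝ) ≤ d * (1 + η / 4) ^ (m - 1) := hS.card_le
      _ ≤ d * (1 + η / 2) ^ m := by
          gcongr
          calc (1 + η / 4) ^ (m - 1) ≤ (1 + η / 4) ^ m :=
                pow_le_pow_right₀ (by linarith) (Nat.sub_le m 1)
            _ ≤ (1 + η / 2) ^ m := by gcongr; norm_num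
      _ ≤ (1 + η / 2) ^ m * (ballAvoiding G W A 0).ncard := by
          rw [mul_comm]
          gcongr
          exact (by simpa using hS.le_mul_pow 1 : d ≤ d * m).trans (hA.trans hA0)
      _ ≤ _ := growth
  have hpos : (0 : ℝ) < Nat.card V :=
    (mul_pos hd (pow_pos (zero_lt_one.trans_le hS.one_le) 300)).trans_le hS.le_card
  linarith

lemma exists_walk_avoiding (hS : ExpansionSetting G d η m) {A B W : Set V}
    (hAW : Disjoint A W) (hBW : Disjoint B W) (hA : d * m ≤ (A.ncard : ℝ))
    (hB : d * m ≤ (B.ncard : ℝ)) (hWA : (W.ncard : ℝ) * m ≤ 4 * A.ncard)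
    (hWB : (W.ncard : ℝ) * m ≤ 4 * B.ncard) :
    ∃ a ∈ A, ∃ b ∈ B, ∃ p : G.Walk a b, p.length ≤ 2 * m ∧ ∀ x ∈ p.support, x ∉ W := by
  have hA' := hS.half_card_lt_ncard_ballAvoiding hAW hA hWA
  have hB' := hS.half_card_lt_ncard_ballAvoiding hBW hB hWB
  obtain ⟨x, hxA, hxB⟩ : (ballAvoiding G W A m ∩ ballAvoiding G W B m).Nonempty := by
    rw [← Set.not_disjoint_iff_nonempty_inter]
    intro hdisj
    have hle : ((ballAvoiding G W A m).ncard : ℝ) + (ballAvoiding G W B m).ncard ≤ Nat.card V := by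
      rw [← Set.ncard_univ]
      exact_mod_cast (Set.ncard_union_eq hdisj).ge.trans (Set.ncard_le_ncard (Set.subset_univ _))
    linarith
  rw [two_mul]
  exact exists_walk_of_mem_ballAvoiding_inter hxA hxB

end Connect

end ExpansionSetting

section Robust

variable {V : Type*} {G : SimpleGraph V} {d η : ℝ} {m c : ℕ} {W : Set V}

/-- A vertex is robust relative to `W` if, even after the deletion of `W` and of any further set of
at most `m ^ 5` vertices, it reaches at least `d * m ^ (c + 2)` vertices within distance `m`. -/
def IsRobust (G : SimpleGraph V) (d : ℝ) (m c : ℕ) (W : Set V) (v : V) : Prop :=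
  v ∉ W ∧ ∀ S : Set V, v ∉ S → S.ncard ≤ m ^ 5 →
    d * (m : ℝ) ^ (c + 2) ≤ ((ballAvoiding G (W ∪ S) {v} m).ncard : ℝ)

/-- A set that hardly expands outside `W` and an exceptional set `T` much smaller than itself.  Such
sets arise as unions of slowly growing balls around vertices that are not robust. -/
structure IsStagnant (G : SimpleGraph V) (d η : ℝ) (m : ℕ) (W X T : Set V) : Prop where
  disjoint : Disjoint X W
  ncard_exceptional_le : (T.ncard : ℝ) * (d / 4) ≤ (m : ℝ) ^ 5 * X.ncard
  ncard_extNbr_le : ((extNbr G X \ (W ∪ T)).ncard : ℝ) ≤ η / 4 * X.ncard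

lemma isStagnant_empty (G : SimpleGraph V) (d η : ℝ) (m : ℕ) (W : Set V) :
    IsStagnant G d η m W ∅ ∅ where
  disjoint := Set.empty_disjoint W
  ncard_exceptional_le := by simp
  ncard_extNbr_le := by simp [extNbr]

lemma IsStagnant.union [Finite V] {X T Y S : Set V} (hX : IsStagnant G d η m W X T) (hd : 0 < d)
    (hXY : Disjoint X Y) (hYW : Disjoint Y W) (hS : S.ncard ≤ m ^ 5) (hY : d / 4 ≤ (Y.ncard : ℝ))
    (hYext : ((extNbr G Y \ (W ∪ S ∪ X)).ncard : ℝ) ≤ η / 4 * Y.ncard) :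
    IsStagnant G d η m W (X ∪ Y) (T ∪ S) where
  disjoint := hX.disjoint.union_left hYW
  ncard_exceptional_le := by
    have hS' : (S.ncard : ℝ) ≤ (m : ℝ) ^ 5 := by exact_mod_cast hS
    have hTS : ((T ∪ S).ncard : ℝ) ≤ T.ncard + S.ncard := by exact_mod_cast Set.ncard_union_le T S
    rw [Set.ncard_union_eq hXY, Nat.cast_add]
    calc ((T ∪ S).ncard : ℝ) * (d / 4) ≤ (T.ncard + S.ncard) * (d / 4) := by gcongr
      _ = T.ncard * (d / 4) + S.ncard * (d / 4) := by ring
      _ ≤ (m : ℝ) ^ 5 * X.ncard + (m : ℝ) ^ 5 * Y.ncard :=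
          add_le_add hX.ncard_exceptional_le (by gcongr)
      _ = (m : ℝ) ^ 5 * (X.ncard + Y.ncard) := by ring
  ncard_extNbr_le := by
    have hsub : extNbr G (X ∪ Y) \ (W ∪ (T ∪ S)) ⊆
        (extNbr G X \ (W ∪ T)) ∪ (extNbr G Y \ (W ∪ S ∪ X)) := by
      rintro w ⟨⟨hw, u, hu | hu, huw⟩, hw'⟩ <;> simp only [Set.mem_union, not_or] at hw hw'
      · exact Or.inl ⟨⟨hw.1, u, hu, huw⟩, by simp [hw']⟩
      · exact Or.inr ⟨⟨hw.2, u, hu, huw⟩, by simp [hw', hw.1]⟩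
    have hle : ((extNbr G (X ∪ Y) \ (W ∪ (T ∪ S))).ncard : ℝ)
        ≤ (extNbr G X \ (W ∪ T)).ncard + (extNbr G Y \ (W ∪ S ∪ X)).ncard := by
      exact_mod_cast (Set.ncard_le_ncard hsub).trans (Set.ncard_union_le _ _)
    rw [Set.ncard_union_eq hXY, Nat.cast_add]
    linarith [hX.ncard_extNbr_le]

namespace ExpansionSetting

variable [Finite V]

lemma ncard_lt_of_isStagnant (hS : ExpansionSetting G d η m) (hc : c ≤ 100)
    (hW : (W.ncard : ℝ) ≤ d * (m : ℝ) ^ c) {X T : Set V} (hX : IsStagnant G d η m W X T)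
    (hXle : (X.ncard : ℝ) ≤ 2 * (d * (m : ℝ) ^ (c + 2))) :
    (X.ncard : ℝ) < d * (m : ℝ) ^ (c + 2) := by
  by_contra! hlarge
  have hd := hS.d_pos
  have hm := hS.one_le
  have hX0 : (0 : ℝ) < X.ncard := (mul_pos hd (by positivity)).trans_le hlarge
  have hdX : d * m ≤ (X.ncard : ℝ) := by
    refine le_trans ?_ hlarge
    gcongr
    exact le_self_pow₀ hm (by omega)
  have hXV : (X.ncard : ℝ) ≤ (Nat.card V : ℝ) / 2 := by
    have := hS.mul_pow_le hd.le (show c + 2 < 300 by omega)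
    linarith [hS.le_card]
  have hcover : ((extNbr G X).ncard : ℝ) ≤ (extNbr G X \ (W ∪ T)).ncard + (W.ncard + T.ncard) := by
    exact_mod_cast (Set.ncard_le_ncard_sdiff_add_ncard (extNbr G X) (W ∪ T)).trans
      (Nat.add_le_add_left (Set.ncard_union_le W T) _)
  have hWsmall := hS.lt_quarter_mul_of_mul_le hX0 (s := W.ncard) (by
    calc (W.ncard : ℝ) * m ≤ d * (m : ℝ) ^ c * m := by gcongr
      _ = d * (m : ℝ) ^ (c + 1) := by ring
      _ ≤ d * (m : ℝ) ^ (c + 2) := by gcongr; omega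
      _ ≤ X.ncard := hlarge)
  have hTsmall := hS.lt_quarter_mul_of_mul_le hX0 (s := T.ncard) (by
    refine le_of_mul_le_mul_right ?_ (by positivity : 0 < d / 4)
    have h6 := hS.mul_pow_le zero_le_one (show 6 < 7 by norm_num)
    have h7 := hS.pow_le_d (a := 7) (by norm_num)
    calc (T.ncard : ℝ) * m * (d / 4) = T.ncard * (d / 4) * m := by ring
      _ ≤ (m : ℝ) ^ 5 * X.ncard * m :=
          mul_le_mul_of_nonneg_right hX.ncard_exceptional_le (by linarith)
      _ = X.ncard * (m : ℝ) ^ 6 := by ring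
      _ ≤ X.ncard * (d / 4) := by
          have : (0 : ℝ) ≤ (m : ℝ) ^ 6 := by positivity
          gcongr
          linarith)
  have hexp := hS.expands X hdX hXV
  linarith [hX.ncard_extNbr_le, mul_pos hS.η_pos hX0]

lemma quarter_le_ncard_ballAvoiding_one (hS : ExpansionSetting G d η m) {U S : Set V} {v : V}
    (hv : v ∉ U ∪ S) (hU : ((G.neighborSet v ∩ U).ncard : ℝ) < d / 2) (hSc : S.ncard ≤ m ^ 5) :
    d / 4 ≤ ((ballAvoiding G (U ∪ S) {v} 1).ncard : ℝ) := by
  have hsub : G.neighborSet v ⊆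
      ballAvoiding G (U ∪ S) {v} 1 ∪ (G.neighborSet v ∩ U) ∪ S := by
    intro x hx
    by_cases hxU : x ∈ U
    · exact Or.inl (Or.inr ⟨hx, hxU⟩)
    by_cases hxS : x ∈ S
    · exact Or.inr hxS
    · exact Or.inl (Or.inl (mem_ballAvoiding_succ (subset_ballAvoiding
        (Set.disjoint_singleton_left.2 hv) 0 rfl) hx (by simp [hxU, hxS])))
  have hle : ((G.neighborSet v).ncard : ℝ)
      ≤ (ballAvoiding G (U ∪ S) {v} 1).ncard + (G.neighborSet v ∩ U).ncard + S.ncard := by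
    exact_mod_cast (Set.ncard_le_ncard hsub).trans ((Set.ncard_union_le _ _).trans
      (Nat.add_le_add_right (Set.ncard_union_le _ _) _))
  have hSd : (S.ncard : ℝ) ≤ d / 4 := by
    have h5 := hS.mul_pow_le zero_le_one (show 5 < 6 by norm_num)
    have h6 := hS.pow_le_d (a := 6) (by norm_num)
    have hSm : (S.ncard : ℝ) ≤ (m : ℝ) ^ 5 := by exact_mod_cast hSc
    have : (0 : ℝ) ≤ (m : ℝ) ^ 5 := by positivity
    linarith
  linarith [hS.minDeg v]

lemma exists_slow_ball (hS : ExpansionSetting G d η m) (hc : c ≤ 100) {U S : Set V} {v : V}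
    (hv : v ∉ U ∪ S) (hU : ((G.neighborSet v ∩ U).ncard : ℝ) < d / 2) (hSc : S.ncard ≤ m ^ 5)
    (hball : ((ballAvoiding G (U ∪ S) {v} m).ncard : ℝ) < d * (m : ℝ) ^ (c + 2)) :
    ∃ Y : Set V, Disjoint Y (U ∪ S) ∧ d / 4 ≤ (Y.ncard : ℝ) ∧
      (Y.ncard : ℝ) < d * (m : ℝ) ^ (c + 2) ∧
      ((extNbr G Y \ (U ∪ S)).ncard : ℝ) ≤ η / 4 * Y.ncard := by
  set B : ℕ → Set V := ballAvoiding G (U ∪ S) {v}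
  have hη := hS.η_pos
  have hd := hS.d_pos
  have hm := hS.le_m
  have hB1 : d / 4 ≤ ((B 1).ncard : ℝ) := hS.quarter_le_ncard_ballAvoiding_one hv hU hSc
  have hmono : ∀ {i j}, i ≤ j → ((B i).ncard : ℝ) ≤ (B j).ncard := fun hij => by
    exact_mod_cast Set.ncard_le_ncard (ballAvoiding_mono _ _ hij)
  obtain ⟨j, hj, hslow⟩ : ∃ j < m - 1,
      ((B (j + 2)).ncard : ℝ) ≤ (1 + η / 4) * (B (j + 1)).ncard := by
    by_contra! hfast
    have hgeom := geom_le (u := fun j => ((B (j + 1)).ncard : ℝ)) (c := 1 + η / 4) (by linarith)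
      (m - 1) fun j hj => (hfast j hj).le
    simp only [Nat.sub_add_cancel (show 1 ≤ m by omega), zero_add] at hgeom
    have hpow : 0 ≤ (1 + η / 4) ^ (m - 1) := by positivity
    have hsmall : 1000 * (d * (m : ℝ) ^ (c + 2)) ≤ d * (1 + η / 4) ^ (m - 1) :=
      (hS.mul_pow_le hd.le (show c + 2 < 300 by omega)).trans (hS.le_card.trans hS.card_le)
    have := mul_le_mul_of_nonneg_left hB1 hpow
    linarith
  refine ⟨B (j + 1), disjoint_ballAvoiding _ _ _, hB1.trans (hmono (by omega)),
    (hmono (by omega)).trans_lt hball, ?_⟩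
  have hsub : extNbr G (B (j + 1)) \ (U ∪ S) ⊆ B (j + 2) \ B (j + 1) :=
    fun x ⟨⟨hx, u, hu, hux⟩, hxU⟩ => ⟨mem_ballAvoiding_succ hu hux hxU, hx⟩
  have hdiff : ((B (j + 2) \ B (j + 1)).ncard : ℝ) + (B (j + 1)).ncard = (B (j + 2)).ncard := by
    exact_mod_cast Set.ncard_sdiff_add_ncard_of_subset (ballAvoiding_mono _ _ (by omega))
  have hle : ((extNbr G (B (j + 1)) \ (U ∪ S)).ncard : ℝ) ≤ (B (j + 2) \ B (j + 1)).ncard := by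
    exact_mod_cast Set.ncard_le_ncard hsub
  linarith

lemma exists_mem_few_neighbors (hS : ExpansionSetting G d η m)
    (hW : (W.ncard : ℝ) ≤ d * (m : ℝ) ^ c) {X B : Set V}
    (hX : (X.ncard : ℝ) ≤ 2 * (d * (m : ℝ) ^ (c + 2))) (hBW : Disjoint B W)
    (hB : d * (m : ℝ) ^ (2 * c + 10) < (B.ncard : ℝ)) :
    ∃ v ∈ B, v ∉ X ∧ ((G.neighborSet v ∩ (W ∪ X)).ncard : ℝ) < d / 2 := by
  by_contra! hmany
  have hd := hS.d_pos.le
  have hWX : ((W ∪ X).ncard : ℝ) ≤ d * (m : ℝ) ^ (c + 3) := by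
    have hunion : ((W ∪ X).ncard : ℝ) ≤ W.ncard + X.ncard := by
      exact_mod_cast Set.ncard_union_le W X
    have h2 := hS.mul_pow_le hd (show c < c + 2 by omega)
    have h3 := hS.mul_pow_le hd (show c + 2 < c + 3 by omega)
    have : 0 ≤ d * (m : ℝ) ^ (c + 2) := by positivity
    linarith
  set H := {x | x ∉ W ∪ X ∧ d / 2 ≤ ((G.neighborSet x ∩ (W ∪ X)).ncard : ℝ)}
  have hHle : (H.ncard : ℝ) ≤ d * (m : ℝ) ^ (2 * (c + 3) + 3) := hS.ncard_many_neighbors_le hWX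
  have hsub : B ⊆ X ∪ H := by
    intro v hv
    by_cases hvX : v ∈ X
    exacts [Or.inl hvX, Or.inr ⟨by simp [hvX, Set.disjoint_left.1 hBW hv], hmany v hv hvX⟩]
  have hBle : (B.ncard : ℝ) ≤ X.ncard + H.ncard := by
    exact_mod_cast (Set.ncard_le_ncard hsub).trans (Set.ncard_union_le X H)
  have h2 := hS.mul_pow_le hd (show c + 2 < 2 * c + 10 by omega)
  have h9 := hS.mul_pow_le hd (show 2 * (c + 3) + 3 < 2 * c + 10 by omega)
  have : 0 ≤ d * (m : ℝ) ^ (2 * c + 10) := by positivity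
  linarith

-- A maximal stagnant set could be enlarged by a slowly growing ball around a non-robust vertex.
lemma ncard_not_isRobust_le (hS : ExpansionSetting G d η m) (hc : c ≤ 100)
    (hW : (W.ncard : ℝ) ≤ d * (m : ℝ) ^ c) :
    ({v | v ∉ W ∧ ¬ IsRobust G d m c W v}.ncard : ℝ) ≤ d * (m : ℝ) ^ (2 * c + 10) := by
  by_contra! hlarge
  have hd := hS.d_pos
  obtain ⟨X, ⟨⟨T, hX⟩, hXle⟩, hmax⟩ := (Set.toFinite {X : Set V | (∃ T, IsStagnant G d η m W X T) ∧
    (X.ncard : ℝ) ≤ 2 * (d * (m : ℝ) ^ (c + 2))}).exists_maximalFor Set.ncard _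
    ⟨∅, ⟨∅, isStagnant_empty G d η m W⟩, by simpa using by positivity⟩
  have hXlt := hS.ncard_lt_of_isStagnant hc hW hX hXle
  obtain ⟨v, ⟨hvW, hvrob⟩, hvX, hvdeg⟩ := hS.exists_mem_few_neighbors hW hXle
    (Set.disjoint_left.2 fun v hv => hv.1) hlarge
  obtain ⟨S, hvS, hSc, hball⟩ : ∃ S : Set V, v ∉ S ∧ S.ncard ≤ m ^ 5 ∧
      ((ballAvoiding G (W ∪ S) {v} m).ncard : ℝ) < d * (m : ℝ) ^ (c + 2) := by
    simpa [IsRobust, hvW] using hvrob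
  have hball' : ((ballAvoiding G (W ∪ X ∪ S) {v} m).ncard : ℝ) < d * (m : ℝ) ^ (c + 2) := by
    refine lt_of_le_of_lt ?_ hball
    exact_mod_cast Set.ncard_le_ncard
      (ballAvoiding_anti (Set.union_subset_union_left S Set.subset_union_left) _ _)
  obtain ⟨Y, hYdisj, hYge, hYlt, hYext⟩ :=
    hS.exists_slow_ball hc (by simp [hvW, hvX, hvS]) hvdeg hSc hball'
  obtain ⟨⟨hYW, hYX⟩, -⟩ : (Disjoint Y W ∧ Disjoint Y X) ∧ Disjoint Y S := by
    simpa only [Set.disjoint_union_right] using hYdisj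
  have hcard := Set.ncard_union_eq hYX.symm
  have hXY : IsStagnant G d η m W (X ∪ Y) (T ∪ S) :=
    hX.union hd hYX.symm hYW hSc hYge (by rwa [Set.union_right_comm])
  have hle : (X ∪ Y).ncard ≤ X.ncard := hmax ⟨⟨_, hXY⟩, by
    rw [hcard, Nat.cast_add]
    linarith⟩ (by rw [hcard]; exact Nat.le_add_right _ _)
  have hY0 : 0 < Y.ncard := by exact_mod_cast (by positivity : 0 < d / 4).trans_le hYge
  omega

lemma exists_path_avoiding (hS : ExpansionSetting G d η m) (hW : (W.ncard : ℝ) ≤ d * (m : ℝ) ^ c)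
    {u v : V} (hu : IsRobust G d m c W u) (hv : IsRobust G d m c W v) {S : Set V} (huS : u ∉ S)
    (hvS : v ∉ S) (hSc : S.ncard ≤ m ^ 5) :
    ∃ p : G.Walk u v, p.IsPath ∧ p.length ≤ 4 * m ∧ ∀ x ∈ p.support, x ∉ W ∪ S := by
  classical
  have hd := hS.d_pos
  have hm := hS.one_le
  have hu' := hu.2 S huS hSc
  have hv' := hv.2 S hvS hSc
  have hdm : d * m ≤ d * (m : ℝ) ^ (c + 2) := by
    gcongr
    exact le_self_pow₀ hm (by omega)
  have hWS : ((W ∪ S).ncard : ℝ) * m ≤ d * (m : ℝ) ^ (c + 2) := by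
    have hunion : ((W ∪ S).ncard : ℝ) ≤ W.ncard + S.ncard := by
      exact_mod_cast Set.ncard_union_le W S
    have hSm : (S.ncard : ℝ) ≤ (m : ℝ) ^ 5 := by exact_mod_cast hSc
    have h5 := hS.pow_le_d (a := 5) (by norm_num)
    have hc := hS.mul_pow_le hd.le (show c < c + 1 by omega)
    calc ((W ∪ S).ncard : ℝ) * m ≤ d * (m : ℝ) ^ (c + 1) * m := by
          gcongr
          linarith [hS.le_mul_pow c]
      _ = d * (m : ℝ) ^ (c + 2) := by ring
  obtain ⟨a, ⟨_, rfl, q, hq, hqW⟩, b, ⟨_, rfl, r, hr, hrW⟩, p, hp, hpW⟩ :=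
    hS.exists_walk_avoiding (disjoint_ballAvoiding (G := G) (W ∪ S) {u} m)
      (disjoint_ballAvoiding (G := G) (W ∪ S) {v} m) (hdm.trans hu') (hdm.trans hv')
      (by linarith) (by linarith)
  refine ⟨(q.append (p.append r.reverse)).bypass, SimpleGraph.Walk.bypass_isPath _, ?_, ?_⟩
  · refine (SimpleGraph.Walk.length_bypass_le_length _).trans ?_
    simp only [SimpleGraph.Walk.length_append, SimpleGraph.Walk.length_reverse]
    omega
  · intro y hy
    have hy' := SimpleGraph.Walk.support_bypass_subset_support _ hy
    simp only [SimpleGraph.Walk.mem_support_append_iff, SimpleGraph.Walk.support_reverse,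
      List.mem_reverse] at hy'
    rcases hy' with hy' | hy' | hy'
    exacts [hqW y hy', hpW y hy', hrW y hy']

end ExpansionSetting

end Robust

section PathBundle

variable {V : Type*} {G : SimpleGraph V} {u v w : V} {l l' k k' : ℕ} {A B : Set V}

/-- The graph `G` contains paths from `u` to `w` of lengths `l, l + 2, …, l + 2 * k`, all of them
inside `A`. -/
def IsPathBundle (G : SimpleGraph V) (u w : V) (l k : ℕ) (A : Set V) : Prop :=
  ∀ i ≤ k, ∃ p : G.Walk u w, p.IsPath ∧ p.length = l + 2 * i ∧ ∀ x ∈ p.support, x ∈ A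

lemma isPath_append {p : G.Walk u v} {q : G.Walk v w} (hp : p.IsPath) (hq : q.IsPath)
    (h : ∀ x ∈ p.support, x ∈ q.support → x = v) : (p.append q).IsPath := by
  rw [SimpleGraph.Walk.isPath_def, SimpleGraph.Walk.support_append, List.nodup_append]
  have hq' := hq.support_nodup
  rw [← SimpleGraph.Walk.cons_tail_support, List.nodup_cons] at hq'
  refine ⟨hp.support_nodup, hq'.2, ?_⟩
  rintro a ha _ hb rfl
  obtain rfl := h a ha (List.mem_of_mem_tail hb)
  exact hq'.1 hb

lemma ncard_support_le (p : G.Walk u v) : {x | x ∈ p.support}.ncard ≤ p.length + 1 := by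
  classical
  rw [← SimpleGraph.Walk.length_support, ← List.coe_toFinset, Set.ncard_coe_finset]
  exact List.toFinset_card_le p.support

lemma isPathBundle_singleton (G : SimpleGraph V) (u : V) : IsPathBundle G u u 0 0 {u} :=
  fun _ hi => ⟨.nil, .nil, by simpa using hi, by simp⟩

lemma isPathBundle_support {p : G.Walk u v} (hp : p.IsPath) :
    IsPathBundle G u v p.length 0 {x | x ∈ p.support} :=
  fun i hi => ⟨p, hp, by omega, fun _ hx => hx⟩

namespace IsPathBundle

lemma left_mem (h : IsPathBundle G u w l k A) : u ∈ A := by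
  obtain ⟨p, -, -, hA⟩ := h 0 (Nat.zero_le k)
  exact hA u p.start_mem_support

lemma right_mem (h : IsPathBundle G u w l k A) : w ∈ A := by
  obtain ⟨p, -, -, hA⟩ := h 0 (Nat.zero_le k)
  exact hA w p.end_mem_support

lemma comp (h₁ : IsPathBundle G u v l k A) (h₂ : IsPathBundle G v w l' k' B)
    (hAB : ∀ x ∈ A, x ∈ B → x = v) : IsPathBundle G u w (l + l') (k + k') (A ∪ B) := by
  intro i hi
  obtain ⟨p, hp, hpl, hpA⟩ := h₁ (min i k) (min_le_right i k)
  obtain ⟨q, hq, hql, hqB⟩ := h₂ (i - min i k) (by omega)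
  refine ⟨p.append q, isPath_append hp hq fun x hx hx' => hAB x (hpA x hx) (hqB x hx'), ?_, ?_⟩
  · rw [SimpleGraph.Walk.length_append]
    omega
  · intro x hx
    rw [SimpleGraph.Walk.mem_support_append_iff] at hx
    exact hx.imp (hpA x) (hqB x)

end IsPathBundle

-- On the cycle `p ∪ q`, of length `2k`, take the vertex `b` at distance `k - 1` from `u` along `q`.
lemma exists_isPathBundle_one (p q : G.Walk u v) (hp : p.IsPath) (hq : q.IsPath)
    (hpq : p.length ≤ q.length) (h2 : 2 ≤ p.length) (heven : Even (p.length + q.length))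
    (hdisj : ∀ x ∈ p.support, x ∈ q.support → x = u ∨ x = v) :
    ∃ b l, l ≤ q.length ∧ IsPathBundle G u b l 1 ({x | x ∈ p.support} ∪ {x | x ∈ q.support}) := by
  obtain ⟨k, hk⟩ := heven
  have hql : (q.take (k - 1)).length = k - 1 := by
    rw [SimpleGraph.Walk.take_length]
    omega
  have hmeet : ∀ x ∈ (q.take (k - 1)).support, x ∈ (q.drop (k - 1)).support →
      x = q.getVert (k - 1) := fun x hx hx' => by
    by_contra hne
    exact SimpleGraph.Walk.IsPath.ne_of_mem_support_of_append
      (by rwa [SimpleGraph.Walk.append_take_drop_eq]) hne hx hx' rfl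
  have hub : u ≠ q.getVert (k - 1) := fun h => by
    have := (hq.getVert_eq_start_iff (i := k - 1) (by omega)).1 h.symm
    omega
  have hdrop := (q.isSubwalk_drop (k - 1)).support_subset
  refine ⟨q.getVert (k - 1), k - 1, by omega, fun i hi => ?_⟩
  interval_cases i
  · exact ⟨q.take (k - 1), hq.take _, hql,
      fun x hx => Or.inr ((q.isSubwalk_take (k - 1)).support_subset hx)⟩
  · refine ⟨p.append (q.drop (k - 1)).reverse, isPath_append hp (hq.drop _).reverse ?_, ?_, ?_⟩
    · intro x hx hx'
      rw [SimpleGraph.Walk.support_reverse, List.mem_reverse] at hx'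
      refine (hdisj x hx (hdrop hx')).resolve_left ?_
      rintro rfl
      exact hub (hmeet x (SimpleGraph.Walk.start_mem_support _) hx')
    · rw [SimpleGraph.Walk.length_append, SimpleGraph.Walk.length_reverse,
        SimpleGraph.Walk.drop_length]
      omega
    · intro x hx
      rw [SimpleGraph.Walk.mem_support_append_iff, SimpleGraph.Walk.support_reverse,
        List.mem_reverse] at hx
      exact hx.imp_right fun hx => hdrop hx

lemma IsBipartite.nonempty_coloring (hG : IsBipartite G) : Nonempty (G.Coloring Bool) := by
  classical
  obtain ⟨X, hX⟩ := hG
  exact ⟨.mk (fun v => decide (v ∈ X)) fun {v w} h => by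
    simpa [not_iff] using (not_congr (hX h)).trans not_not⟩

end PathBundle

section Chain

variable {V : Type*} [Finite V] {G : SimpleGraph V} {d η : ℝ} {m c : ℕ} {W S : Set V}

namespace ExpansionSetting

lemma exists_isRobust_notMem (hS : ExpansionSetting G d η m) (hc : c ≤ 100)
    (hW : (W.ncard : ℝ) ≤ d * (m : ℝ) ^ c) (hSc : S.ncard ≤ m ^ 5) :
    ∃ v, IsRobust G d m c W v ∧ v ∉ S := by
  by_contra! hall
  have hd := hS.d_pos
  have hcover : (Set.univ : Set V) ⊆ W ∪ {v | v ∉ W ∧ ¬ IsRobust G d m c W v} ∪ S := by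
    intro v _
    by_cases hv : IsRobust G d m c W v
    · exact Or.inr (hall v hv)
    · by_cases hvW : v ∈ W
      exacts [Or.inl (Or.inl hvW), Or.inl (Or.inr ⟨hvW, hv⟩)]
  have hcard : (Nat.card V : ℝ)
      ≤ W.ncard + {v | v ∉ W ∧ ¬ IsRobust G d m c W v}.ncard + S.ncard := by
    rw [← Set.ncard_univ]
    exact_mod_cast (Set.ncard_le_ncard hcover).trans ((Set.ncard_union_le _ _).trans
      (Nat.add_le_add_right (Set.ncard_union_le _ _) _))
  have hSd : (S.ncard : ℝ) ≤ d :=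
    le_trans (by exact_mod_cast hSc) (hS.pow_le_d (a := 5) (by norm_num))
  have hrob := hS.ncard_not_isRobust_le hc hW
  have h1 := hS.mul_pow_le hd.le (show c < 300 by omega)
  have h2 := hS.mul_pow_le hd.le (show 2 * c + 10 < 300 by omega)
  have h3 := hS.mul_pow_le hd.le (show 0 < 300 by omega)
  rw [pow_zero, mul_one] at h3
  linarith [hS.le_card]

lemma exists_isRobust_pair (hS : ExpansionSetting G d η m) (hc : c ≤ 100)
    (hW : (W.ncard : ℝ) ≤ d * (m : ℝ) ^ c) (hSc : S.ncard + 2 ≤ m ^ 5) (C : G.Coloring Bool) :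
    ∃ u v, IsRobust G d m c W u ∧ IsRobust G d m c W v ∧ u ∉ S ∧ v ∉ S ∧ u ≠ v ∧ C u = C v := by
  obtain ⟨v₁, hr₁, hv₁⟩ := hS.exists_isRobust_notMem hc hW (S := S) (by omega)
  have hi₁ := Set.ncard_insert_le v₁ S
  obtain ⟨v₂, hr₂, hv₂⟩ := hS.exists_isRobust_notMem hc hW (S := insert v₁ S) (by omega)
  have hi₂ := Set.ncard_insert_le v₂ (insert v₁ S)
  obtain ⟨v₃, hr₃, hv₃⟩ :=
    hS.exists_isRobust_notMem hc hW (S := insert v₂ (insert v₁ S)) (by omega)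
  simp only [Set.mem_insert_iff, not_or] at hv₂ hv₃
  by_cases h₁₂ : C v₁ = C v₂
  · exact ⟨v₁, v₂, hr₁, hr₂, hv₁, hv₂.2, Ne.symm hv₂.1, h₁₂⟩
  by_cases h₁₃ : C v₁ = C v₃
  · exact ⟨v₁, v₃, hr₁, hr₃, hv₁, hv₃.2.2, Ne.symm hv₃.2.1, h₁₃⟩
  refine ⟨v₂, v₃, hr₂, hr₃, hv₂.2, hv₃.2.2, Ne.symm hv₃.1, ?_⟩
  exact (Bool.eq_not.2 (Ne.symm h₁₂)).trans (Bool.eq_not.2 (Ne.symm h₁₃)).symm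

lemma exists_internally_disjoint_paths (hS : ExpansionSetting G d η m)
    (hW : (W.ncard : ℝ) ≤ d * (m : ℝ) ^ c) {u v : V} (hu : IsRobust G d m c W u)
    (hv : IsRobust G d m c W v) (huS : u ∉ S) (hvS : v ∉ S) (hSc : S.ncard ≤ m ^ 4) :
    ∃ p q : G.Walk u v, p.IsPath ∧ q.IsPath ∧ p.length ≤ 4 * m ∧ q.length ≤ 4 * m ∧
      (∀ x, x ∈ p.support ∨ x ∈ q.support → x ∉ W ∪ S) ∧
      ∀ x ∈ p.support, x ∈ q.support → x = u ∨ x = v := by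
  have hm := hS.le_m
  have h45 : m ^ 4 * 1000 ≤ m ^ 5 := by
    rw [pow_succ m 4]
    exact Nat.mul_le_mul_left _ hm
  have h14 : m ≤ m ^ 4 := Nat.le_self_pow (by norm_num) m
  obtain ⟨p, hp, hpl, hpW⟩ := hS.exists_path_avoiding hW hu hv huS hvS (by omega)
  set I : Set V := {x | x ∈ p.support} \ {u, v}
  have hIc : I.ncard ≤ 4 * m + 1 :=
    (Set.ncard_le_ncard Set.sdiff_subset).trans ((ncard_support_le p).trans (by omega))
  have hSI := Set.ncard_union_le S I
  obtain ⟨q, hq, hql, hqW⟩ := hS.exists_path_avoiding hW hu hv (S := S ∪ I)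
    (by simp [I, huS]) (by simp [I, hvS]) (by omega)
  refine ⟨p, q, hp, hq, hpl, hql, ?_, fun x hx hx' => ?_⟩
  · rintro x (hx | hx)
    · exact hpW x hx
    · exact fun h => hqW x hx (Set.union_subset_union_right W Set.subset_union_left h)
  · by_contra hne
    exact hqW x hx' (Or.inr (Or.inr ⟨hx, hne⟩))

lemma exists_isPathBundle_one (hS : ExpansionSetting G d η m) (hc : c ≤ 100)
    (hW : (W.ncard : ℝ) ≤ d * (m : ℝ) ^ c) (hSc : S.ncard ≤ m ^ 4) :
    ∃ a b l A, IsPathBundle G a b l 1 A ∧ l ≤ 4 * m ∧ A.ncard ≤ 9 * m ∧ Disjoint A (W ∪ S) := by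
  have hm := hS.le_m
  have h45 : m ^ 4 * 1000 ≤ m ^ 5 := by
    rw [pow_succ m 4]
    exact Nat.mul_le_mul_left _ hm
  have h14 : m ≤ m ^ 4 := Nat.le_self_pow (by norm_num) m
  obtain ⟨C⟩ := hS.bipartite.nonempty_coloring
  obtain ⟨u, v, hu, hv, huS, hvS, huv, hC⟩ :=
    hS.exists_isRobust_pair (S := S) hc hW (by omega) C
  have heven : ∀ p : G.Walk u v, Even p.length := fun p => by
    rw [C.even_length_iff_congr p, hC]
  have hlen : ∀ p : G.Walk u v, 2 ≤ p.length := fun p => by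
    have h0 : p.length ≠ 0 := fun h => huv (SimpleGraph.Walk.eq_of_length_eq_zero h)
    obtain ⟨r, hr⟩ := heven p
    omega
  obtain ⟨p, q, hp, hq, hpl, hql, hpqW, hmeet⟩ :=
    hS.exists_internally_disjoint_paths hW hu hv huS hvS hSc
  wlog hpq : p.length ≤ q.length generalizing p q
  · exact this q p hq hp hql hpl (fun x hx => hpqW x hx.symm) (fun x hx hx' => hmeet x hx' hx)
      (le_of_not_ge hpq)
  obtain ⟨b, l, hl, hA⟩ :=
    _root_.exists_isPathBundle_one p q hp hq hpq (hlen p) ((heven p).add (heven q)) hmeet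
  refine ⟨u, b, l, _, hA, hl.trans hql, ?_, Set.disjoint_left.2 hpqW⟩
  have hpc := ncard_support_le p
  have hqc := ncard_support_le q
  have hle := Set.ncard_union_le {x | x ∈ p.support} {x | x ∈ q.support}
  omega

end ExpansionSetting

/-- A path bundle inside `A` that ends in a robust vertex and avoids both `W` and `S`. -/
structure IsRobustBundle (G : SimpleGraph V) (d : ℝ) (m c : ℕ) (W S : Set V) (u w : V) (l k : ℕ)
    (A : Set V) : Prop where
  bundle : IsPathBundle G u w l k A
  robust : IsRobust G d m c W w
  disjoint : Disjoint A (W ∪ S)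

namespace IsRobustBundle

variable {u w : V} {l k : ℕ} {A : Set V}

lemma extend (h : IsRobustBundle G d m c W S u w l k A) (hS : ExpansionSetting G d η m)
    (hW : (W.ncard : ℝ) ≤ d * (m : ℝ) ^ c) {a : V} (ha : IsRobust G d m c W a) (haA : a ∉ A)
    (haS : a ∉ S) (hc : A.ncard + S.ncard ≤ m ^ 5) :
    ∃ l' A', IsRobustBundle G d m c W S u a l' k A' ∧ l < l' ∧ l' ≤ l + 4 * m ∧
      A'.ncard + l ≤ A.ncard + l' := by
  have hwA := h.bundle.right_mem
  have hAWS : ∀ x ∈ A, x ∉ W ∪ S := fun x hx => Set.disjoint_left.1 h.disjoint hx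
  have hunion := Set.ncard_union_le (A \ {w}) S
  have hdiff := Set.ncard_sdiff_singleton_le A w
  obtain ⟨p, hp, hpl, hpW⟩ := hS.exists_path_avoiding hW h.robust ha (S := A \ {w} ∪ S)
    (by simpa using fun hwS => hAWS w hwA (Or.inr hwS)) (by simp [haA, haS]) (by omega)
  have hmeet : ∀ x ∈ A, x ∈ p.support → x = w := fun x hx hx' => by
    by_contra hxw
    exact hpW x hx' (Or.inr (Or.inl ⟨hx, hxw⟩))
  have hp0 : p.length ≠ 0 := fun h0 =>
    haA (SimpleGraph.Walk.eq_of_length_eq_zero h0 ▸ hwA)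
  refine ⟨l + p.length, _, ⟨h.bundle.comp (isPathBundle_support hp) hmeet, ha, ?_⟩, by omega,
    by omega, ?_⟩
  · refine Set.disjoint_left.2 fun x hx hxW => hx.elim (fun hx => hAWS x hx hxW) fun hx => ?_
    exact hpW x hx (Set.union_subset_union_right W Set.subset_union_right hxW)
  · have hinter : 0 < (A ∩ {x | x ∈ p.support}).ncard :=
      (Set.ncard_pos (Set.toFinite _)).2 ⟨w, hwA, p.start_mem_support⟩
    have hsum := Set.ncard_union_add_ncard_inter A {x | x ∈ p.support}
    have hpc := ncard_support_le p
    omega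

lemma exists_add_one (h : IsRobustBundle G d m c W S u w l k A) (hS : ExpansionSetting G d η m)
    (hc : c ≤ 44) (hW : (W.ncard : ℝ) ≤ d * (m : ℝ) ^ c) (hAS : A.ncard + S.ncard ≤ m ^ 4) :
    ∃ w' l' A', IsRobustBundle G d m c W S u w' l' (k + 1) A' ∧ l' ≤ l + 8 * m ∧
      A'.ncard ≤ A.ncard + 20 * m := by
  have hm := hS.le_m
  have h45 : m ^ 4 * 1000 ≤ m ^ 5 := by
    rw [pow_succ m 4]
    exact Nat.mul_le_mul_left _ hm
  have h14 : m ≤ m ^ 4 := Nat.le_self_pow (by norm_num) m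
  set B := {v | v ∉ W ∧ ¬ IsRobust G d m c W v}
  have hrobust : ∀ x ∉ W ∪ B, IsRobust G d m c W x := fun x hx => by
    by_contra hxr
    exact hx (Or.inr ⟨fun hxW => hx (Or.inl hxW), hxr⟩)
  have hWB : ((W ∪ B).ncard : ℝ) ≤ d * (m : ℝ) ^ (2 * c + 11) := by
    have hunion : ((W ∪ B).ncard : ℝ) ≤ W.ncard + B.ncard := by
      exact_mod_cast Set.ncard_union_le W B
    have hd := hS.d_pos
    have h1 := hS.mul_pow_le hd.le (show c < 2 * c + 11 by omega)
    have h2 := hS.mul_pow_le hd.le (show 2 * c + 10 < 2 * c + 11 by omega)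
    have : 0 < d * (m : ℝ) ^ (2 * c + 11) := by positivity
    linarith [hS.ncard_not_isRobust_le (show c ≤ 100 by omega) hW]
  obtain ⟨a, b, l₁, A₁, hA₁, hl₁, hA₁c, hdisj⟩ := hS.exists_isPathBundle_one (S := A ∪ S)
    (show 2 * c + 11 ≤ 100 by omega) hWB ((Set.ncard_union_le A S).trans hAS)
  have hA₁W : ∀ x ∈ A₁, x ∉ W ∪ B ∧ x ∉ A ∧ x ∉ S := fun x hx => by
    simpa only [Set.mem_union, not_or] using Set.disjoint_left.1 hdisj hx
  have haux : IsRobustBundle G d m c W (S ∪ A₁ \ {a}) u w l k A :=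
    ⟨h.bundle, h.robust, by
      rw [← Set.union_assoc, Set.disjoint_union_right]
      exact ⟨h.disjoint, Set.disjoint_left.2 fun x hx hx' => (hA₁W x hx'.1).2.1 hx⟩⟩
  have ha := hA₁W a hA₁.left_mem
  have hSA₁ := Set.ncard_union_le S (A₁ \ {a})
  have hdiff := Set.ncard_sdiff_singleton_le A₁ a
  obtain ⟨l₂, A₂, hA₂, -, hl₂, hA₂c⟩ :=
    haux.extend hS hW (hrobust a ha.1) ha.2.1 (by simp [ha.2.2]) (by omega)
  have hmeet : ∀ x ∈ A₂, x ∈ A₁ → x = a := fun x hx hx' => by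
    by_contra hxa
    exact Set.disjoint_left.1 hA₂.disjoint hx (Or.inr (Or.inr ⟨hx', hxa⟩))
  refine ⟨b, l₂ + l₁, A₂ ∪ A₁, ⟨hA₂.bundle.comp hA₁ hmeet, hrobust b (hA₁W b hA₁.right_mem).1,
    Set.disjoint_union_left.2 ⟨?_, ?_⟩⟩, by omega, (Set.ncard_union_le A₂ A₁).trans (by omega)⟩
  · exact hA₂.disjoint.mono_right (Set.union_subset_union_right W Set.subset_union_left)
  · exact hdisj.mono_right (Set.union_subset_union Set.subset_union_left Set.subset_union_right)

lemma exists_le_length (h : IsRobustBundle G d m c W S u w l k A) (hS : ExpansionSetting G d η m)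
    (hc : c ≤ 100) (hW : (W.ncard : ℝ) ≤ d * (m : ℝ) ^ c) (s : ℕ)
    (hs : A.ncard + S.ncard + s + 4 * m ≤ m ^ 5) :
    ∃ w' l' A', IsRobustBundle G d m c W S u w' l' k A' ∧ l + s ≤ l' ∧ l' ≤ l + s + 4 * m ∧
      A'.ncard + l ≤ A.ncard + l' := by
  induction s with
  | zero => exact ⟨w, l, A, h, by omega, by omega, le_rfl⟩
  | succ s ih =>
    obtain ⟨w₁, l₁, A₁, h₁, hle, hge, hA₁⟩ := ih (by omega)
    rcases hle.lt_or_eq with hlt | heq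
    · exact ⟨w₁, l₁, A₁, h₁, hlt, by omega, hA₁⟩
    have hunion := Set.ncard_union_le A₁ S
    obtain ⟨a, ha, haAS⟩ := hS.exists_isRobust_notMem hc hW (S := A₁ ∪ S) (by omega)
    rw [Set.mem_union, not_or] at haAS
    obtain ⟨l₂, A₂, h₂, hlt, hl₂, hA₂⟩ := h₁.extend hS hW ha haAS.1 haAS.2 (by omega)
    exact ⟨a, l₂, A₂, h₂, by omega, by omega, by omega⟩

end IsRobustBundle

namespace ExpansionSetting

lemma exists_isRobustBundle (hS : ExpansionSetting G d η m) (hc : c ≤ 44)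
    (hW : (W.ncard : ℝ) ≤ d * (m : ℝ) ^ c) {u : V} (hu : IsRobust G d m c W u) (huS : u ∉ S)
    (hSc : S.ncard ≤ m ^ 3) {t : ℕ} (ht : t ≤ m ^ 2) :
    ∃ w l A, IsRobustBundle G d m c W S u w l t A ∧ l ≤ 8 * (m * t) ∧
      A.ncard ≤ 20 * (m * t) + 1 := by
  have hm := hS.le_m
  induction t with
  | zero =>
    exact ⟨u, 0, {u}, ⟨isPathBundle_singleton G u, hu, by simp [hu.1, huS]⟩, by simp, by simp⟩
  | succ t ih =>
    obtain ⟨w, l, A, h, hl, hA⟩ := ih (by omega)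
    have hmt : m * t ≤ m ^ 3 := by
      calc m * t ≤ m * m ^ 2 := Nat.mul_le_mul_left _ (by omega)
        _ = m ^ 3 := by ring
    have h34 : m ^ 3 * 1000 ≤ m ^ 4 := by
      rw [pow_succ m 3]
      exact Nat.mul_le_mul_left _ hm
    have hm3 : 0 < m ^ 3 := by positivity
    obtain ⟨w', l', A', h', hl', hA'⟩ := h.exists_add_one hS hc hW (by omega)
    rw [mul_add_one]
    exact ⟨w', l', A', h', by omega, by omega⟩

lemma exists_isPathBundle_sq (hS : ExpansionSetting G d η m) (hc : c ≤ 44)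
    (hW : (W.ncard : ℝ) ≤ d * (m : ℝ) ^ c) {u v : V} (hu : IsRobust G d m c W u)
    (hv : IsRobust G d m c W v) (huv : u ≠ v) :
    ∃ l A, IsPathBundle G u v l (m ^ 2) A ∧ 80 * m ^ 3 ≤ l + 2 * m ^ 2 ∧
      l + 2 * m ^ 2 ≤ 80 * m ^ 3 + 80 * m ∧ A.ncard ≤ 200 * m ^ 3 ∧ Disjoint A W := by
  have hm := hS.le_m
  have h12 : 1000 * m ≤ m ^ 2 := by nlinarith
  have h23 : 1000 * m ^ 2 ≤ m ^ 3 := by nlinarith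
  have h35 : 1000 * m ^ 3 ≤ m ^ 5 := by
    calc 1000 * m ^ 3 ≤ m ^ 2 * m ^ 3 := Nat.mul_le_mul_right _ (by omega)
      _ = m ^ 5 := by ring
  have hm3 : m * m ^ 2 = m ^ 3 := by ring
  obtain ⟨w, l, A, h, hl, hA⟩ := hS.exists_isRobustBundle (S := {v}) hc hW hu (by simpa using huv)
    (by rw [Set.ncard_singleton]; omega) le_rfl
  rw [hm3] at hl hA
  obtain ⟨w₁, l₁, A₁, h₁, hl₁, hl₁', hA₁⟩ := h.exists_le_length hS (by omega) hW
    (80 * m ^ 3 - 2 * m ^ 2 - l) (by rw [Set.ncard_singleton]; omega)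
  have hvA₁ : v ∉ A₁ := Set.disjoint_right.1 h₁.disjoint (Or.inr rfl)
  have h₁' : IsRobustBundle G d m c W ∅ u w₁ l₁ (m ^ 2) A₁ :=
    ⟨h₁.bundle, h₁.robust, h₁.disjoint.mono_right (by simp)⟩
  obtain ⟨l₂, A₂, h₂, hlt, hl₂, hA₂⟩ :=
    h₁'.extend hS hW hv hvA₁ (Set.notMem_empty v) (by rw [Set.ncard_empty]; omega)
  exact ⟨l₂, A₂, h₂.bundle, by omega, by omega, by omega, h₂.disjoint.mono_right (by simp)⟩

end ExpansionSetting

end Chain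

section Units

variable {V : Type*} {G : SimpleGraph V} {W X : Set V}

lemma ncard_biUnion_le_mul {ι α : Type*} {t : Set ι} (ht : t.Finite) {s : ι → Set α} {k : ℕ}
    (hs : ∀ i ∈ t, (s i).ncard ≤ k) : (⋃ i ∈ t, s i).ncard ≤ t.ncard * k := by
  refine (ht.ncard_biUnion_le s).trans ?_
  rw [finsum_mem_eq_finite_toFinset_sum _ ht, Set.ncard_eq_toFinset_card t ht]
  exact Finset.sum_le_card_nsmul _ _ _ fun i hi => hs i (ht.mem_toFinset.1 hi)

lemma exists_injective_fin_mem {α : Type*} [Finite α] {s : Set α} {k : ℕ} (hk : k ≤ s.ncard) :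
    ∃ f : Fin k → α, Function.Injective f ∧ ∀ i, f i ∈ s := by
  have := Fintype.ofFinite s
  obtain ⟨e⟩ := Function.Embedding.nonempty_of_card_le (α := Fin k) (β := s)
    (by rwa [Fintype.card_fin, ← Nat.card_eq_fintype_card])
  exact ⟨fun i => e i, Subtype.val_injective.comp e.injective, fun i => (e i).2⟩

/-- Pairwise disjoint stars with `q` leaves that avoid `W`: the centres are the elements of `I`, and
`Λ u` is the set of leaves of the star with centre `u`. -/
structure IsStarFamily (G : SimpleGraph V) (W I : Set V) (Λ : V → Set V) (q : ℕ) : Prop where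
  subset_neighborSet : ∀ u ∈ I, Λ u ⊆ G.neighborSet u
  ncard_eq : ∀ u ∈ I, (Λ u).ncard = q
  disjoint : ∀ u ∈ I, Disjoint (insert u (Λ u)) W
  pairwiseDisjoint : I.PairwiseDisjoint fun u => insert u (Λ u)

namespace IsStarFamily

variable {I J : Set V} {Λ : V → Set V} {q : ℕ}

lemma mono (h : IsStarFamily G W I Λ q) {W' : Set V} (hW : W' ⊆ W) (hJ : J ⊆ I) :
    IsStarFamily G W' J Λ q :=
  ⟨fun u hu => h.subset_neighborSet u (hJ hu), fun u hu => h.ncard_eq u (hJ hu),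
    fun u hu => (h.disjoint u (hJ hu)).mono_right hW, h.pairwiseDisjoint.subset hJ⟩

lemma centre_notMem (h : IsStarFamily G W I Λ q) {u : V} (hu : u ∈ I) : u ∉ W :=
  Set.disjoint_left.1 (h.disjoint u hu) (Set.mem_insert u _)

lemma pairwiseDisjoint_leaves (h : IsStarFamily G W I Λ q) : I.PairwiseDisjoint Λ :=
  h.pairwiseDisjoint.mono_on fun u _ => Set.subset_insert u (Λ u)

lemma insert (h : IsStarFamily G W I Λ q) {v : V} {T : Set V} (hT : T ⊆ G.neighborSet v)
    (hTq : T.ncard = q) (hdisj : Disjoint (insert v T) (W ∪ ⋃ u ∈ I, insert u (Λ u))) :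
    v ∉ I ∧ ∃ Λ', IsStarFamily G W (insert v I) Λ' q := by
  classical
  rw [Set.disjoint_union_right, Set.disjoint_iUnion₂_right] at hdisj
  have hvI : v ∉ I := fun hv =>
    Set.disjoint_left.1 (hdisj.2 v hv) (Set.mem_insert v T) (Set.mem_insert v _)
  have hne : ∀ u ∈ I, Function.update Λ v T u = Λ u := fun u hu =>
    Function.update_of_ne (fun huv : u = v => hvI (huv ▸ hu)) T Λ
  refine ⟨hvI, Function.update Λ v T, Set.forall_mem_insert.2 ⟨?_, fun u hu => ?_⟩,
    Set.forall_mem_insert.2 ⟨?_, fun u hu => ?_⟩, Set.forall_mem_insert.2 ⟨?_, fun u hu => ?_⟩,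
    (Set.pairwiseDisjoint_insert_of_notMem hvI).2
      ⟨h.pairwiseDisjoint.mono_on fun u hu => (by rw [hne u hu]), fun u hu => ?_⟩⟩
  · rwa [Function.update_self]
  · rw [hne u hu]
    exact h.subset_neighborSet u hu
  · rwa [Function.update_self]
  · rw [hne u hu]
    exact h.ncard_eq u hu
  · rw [Function.update_self]
    exact hdisj.1
  · rw [hne u hu]
    exact h.disjoint u hu
  · rw [Function.update_self, hne u hu]
    exact hdisj.2 u hu

variable [Finite V]

lemma ncard_biUnion (h : IsStarFamily G W I Λ q) : (⋃ u ∈ I, Λ u).ncard = I.ncard * q := by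
  have hI := I.toFinite
  rw [hI.ncard_biUnion (fun _ _ => Set.toFinite _) h.pairwiseDisjoint_leaves,
    finsum_mem_congr rfl h.ncard_eq, finsum_mem_eq_finite_toFinset_sum _ hI, Finset.sum_const,
    smul_eq_mul, Set.ncard_eq_toFinset_card I hI]

lemma mul_le_ncard_biUnion_sdiff_add (h : IsStarFamily G W I Λ q) (X : Set V) :
    I.ncard * q ≤ ((⋃ u ∈ I, Λ u) \ X).ncard + X.ncard := by
  rw [← h.ncard_biUnion]
  exact Set.ncard_le_ncard_sdiff_add_ncard _ X

end IsStarFamily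

/-- A fan avoiding `W`: for every `u ∈ J` a path from `z` to `u` with length in `L`, any two of
these paths having only `z` in common.  The vertex set of the path to `u` is `S u`. -/
structure IsFan (G : SimpleGraph V) (W : Set V) (z : V) (L : Finset ℕ) (J : Set V)
    (S : V → Set V) : Prop where
  exists_path : ∀ u ∈ J, ∃ p : G.Walk z u, p.IsPath ∧ p.length ∈ L ∧ S u = {x | x ∈ p.support}
  disjoint : ∀ u ∈ J, Disjoint (S u) W
  inter_subset : ∀ u ∈ J, ∀ w ∈ J, u ≠ w → S u ∩ S w ⊆ {z}

namespace IsFan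

variable {z : V} {L : Finset ℕ} {J K A : Set V} {S : V → Set V}

lemma left_mem (h : IsFan G W z L J S) {u : V} (hu : u ∈ J) : z ∈ S u := by
  obtain ⟨p, -, -, hp⟩ := h.exists_path u hu
  exact hp ▸ p.start_mem_support

lemma right_mem (h : IsFan G W z L J S) {u : V} (hu : u ∈ J) : u ∈ S u := by
  obtain ⟨p, -, -, hp⟩ := h.exists_path u hu
  exact hp ▸ p.end_mem_support

lemma mono (h : IsFan G W z L J S) (hKJ : K ⊆ J) : IsFan G W z L K S :=
  ⟨fun u hu => h.exists_path u (hKJ hu), fun u hu => h.disjoint u (hKJ hu),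
    fun u hu w hw => h.inter_subset u (hKJ hu) w (hKJ hw)⟩

lemma insert (h : IsFan G W z L J S) {u : V} (hu : u ∉ J) {p : G.Walk z u} (hp : p.IsPath)
    (hpL : p.length ∈ L) (hpW : ∀ x ∈ p.support, x ∉ W)
    (hpS : ∀ w ∈ J, ∀ x ∈ p.support, x ∈ S w → x = z) :
    ∃ S', IsFan G W z L (insert u J) S' := by
  classical
  have hne : ∀ w ∈ J, Function.update S u {x | x ∈ p.support} w = S w := fun w hw =>
    Function.update_of_ne (fun hwu : w = u => hu (hwu ▸ hw)) _ S
  refine ⟨Function.update S u {x | x ∈ p.support},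
    Set.forall_mem_insert.2 ⟨⟨p, hp, hpL, Function.update_self ..⟩, fun w hw => ?_⟩,
    Set.forall_mem_insert.2 ⟨?_, fun w hw => ?_⟩, ?_⟩
  · rw [hne w hw]
    exact h.exists_path w hw
  · rw [Function.update_self]
    exact Set.disjoint_left.2 hpW
  · rw [hne w hw]
    exact h.disjoint w hw
  · rintro a (rfl | ha) b (rfl | hb) hab x ⟨hxa, hxb⟩
    · exact absurd rfl hab
    · rw [Function.update_self] at hxa
      exact hpS b hb x hxa (hne b hb ▸ hxb)
    · rw [Function.update_self] at hxb
      exact hpS a ha x hxb (hne a ha ▸ hxa)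
    · exact h.inter_subset a ha b hb hab ⟨hne a ha ▸ hxa, hne b hb ▸ hxb⟩

variable [Finite V]

lemma ncard_biUnion_le (h : IsFan G W z L J S) {k : ℕ} (hL : ∀ l ∈ L, l ≤ k) :
    (⋃ u ∈ J, S u).ncard ≤ J.ncard * (k + 1) :=
  ncard_biUnion_le_mul J.toFinite fun u hu => by
    obtain ⟨p, -, hpL, hp⟩ := h.exists_path u hu
    exact hp ▸ (ncard_support_le p).trans (Nat.succ_le_succ (hL _ hpL))

lemma exists_length_eq (h : IsFan G W z L J S) (hL : L.Nonempty) {k : ℕ}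
    (hk : L.card * k ≤ J.ncard) : ∃ s ∈ L, ∃ K ⊆ J, K.ncard = k ∧ IsFan G W z {s} K S := by
  classical
  have := Fintype.ofFinite V
  have hpaths : ∀ u ∈ J, ∃ l ∈ L, ∃ p : G.Walk z u, p.IsPath ∧ p.length ∈ ({l} : Finset ℕ) ∧
      S u = {x | x ∈ p.support} := fun u hu => by
    obtain ⟨p, hp, hpL, hpS⟩ := h.exists_path u hu
    exact ⟨p.length, hpL, p, hp, Finset.mem_singleton_self _, hpS⟩
  choose! f hfL hf using hpaths
  obtain ⟨s, hs, hfiber⟩ := Finset.exists_le_card_fiber_of_mul_le_card_of_maps_to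
    (s := J.toFinset) (t := L) (f := f) (n := k) (fun u hu => hfL u (Set.mem_toFinset.1 hu)) hL
    (by rwa [← Set.ncard_eq_toFinset_card'])
  obtain ⟨K, hK, rfl⟩ := Finset.exists_subset_card_eq hfiber
  have hKJ : ∀ u ∈ K, u ∈ J ∧ f u = s := fun u hu => by simpa using hK hu
  have hfan := h.mono (K := K) fun u hu => (hKJ u hu).1
  exact ⟨s, hs, K, fun u hu => (hKJ u hu).1, Set.ncard_coe_finset K,
    fun u hu => (hKJ u hu).2 ▸ hf u (hKJ u hu).1, hfan.disjoint, hfan.inter_subset⟩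

lemma ncard_le_ncard_disjoint_add (h : IsFan G W z L J S) (hz : z ∉ A) :
    J.ncard ≤ {u ∈ J | Disjoint (S u) A}.ncard + A.ncard := by
  have hmeet : ∀ u ∈ J \ {u ∈ J | Disjoint (S u) A}, ∃ a ∈ A, a ∈ S u := fun u hu => by
    obtain ⟨a, haS, haA⟩ := Set.not_disjoint_iff.1 fun hd => hu.2 ⟨hu.1, hd⟩
    exact ⟨a, haA, haS⟩
  choose! f hfA hfS using hmeet
  have hinj : Set.InjOn f (J \ {u ∈ J | Disjoint (S u) A}) := fun u hu w hw huw => by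
    by_contra hne
    exact hz (h.inter_subset u hu.1 w hw.1 hne ⟨hfS u hu, huw ▸ hfS w hw⟩ ▸ hfA u hu)
  have hle := Set.ncard_le_ncard_of_injOn f hfA hinj
  have hJ := Set.ncard_sdiff_add_ncard_of_subset (Set.sep_subset J fun u => Disjoint (S u) A)
  omega

end IsFan

lemma exists_maximal_isFan [Finite V] (G : SimpleGraph V) (W : Set V) (z : V) (L : Finset ℕ)
    (K : Set V) : ∃ J ⊆ K, ∃ S, IsFan G W z L J S ∧ ∀ u ∈ K, u ∉ J → ∀ p : G.Walk z u,
      p.IsPath → p.length ∈ L → (∀ x ∈ p.support, x ∉ W) →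
      ∃ w ∈ J, ∃ x ∈ p.support, x ∈ S w ∧ x ≠ z := by
  obtain ⟨J, ⟨hJK, S, hS⟩, hmax⟩ :=
    (Set.toFinite {J | J ⊆ K ∧ ∃ S, IsFan G W z L J S}).exists_maximal
      ⟨∅, Set.empty_subset K, fun _ => ∅, by simp, by simp, by simp⟩
  refine ⟨J, hJK, S, hS, fun u huK huJ p hp hpL hpW => ?_⟩
  by_contra! hcon
  exact huJ (hmax ⟨Set.insert_subset huK hJK, hS.insert huJ hp hpL hpW hcon⟩
    (Set.subset_insert u J) (Set.mem_insert u J))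

variable {z : V} {J A : Set V} {S Λ : V → Set V} {s q h₀ h₁ L : ℕ}

lemma exists_unitIn [Finite V] (hS : IsFan G W z {s} J S) (hΛ : IsStarFamily G W J Λ q)
    (hs : 0 < s) (hsL : s < L) (hJ : h₀ ≤ J.ncard) (hX : ∀ u ∈ J, S u ⊆ X)
    (hq : h₁ + X.ncard ≤ q) :
    ∃ U : UnitIn G h₀ h₁ L, U.core = z ∧ U.interior ⊆ ⋃ u ∈ J, S u ∧
      ∀ i j, U.leaf i j ∉ W ∧ U.leaf i j ∉ X := by
  obtain ⟨c, hc, hcJ⟩ := exists_injective_fin_mem hJ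
  have hleaf : ∀ i, ∃ f : Fin h₁ → V, Function.Injective f ∧ ∀ j, f j ∈ Λ (c i) \ X := fun i => by
    refine exists_injective_fin_mem ?_
    have := Set.ncard_le_ncard_sdiff_add_ncard (Λ (c i)) X
    have := hΛ.ncard_eq _ (hcJ i)
    omega
  choose f hf hfΛ using hleaf
  choose p hp hpl hpS using fun i => hS.exists_path _ (hcJ i)
  have hmem : ∀ i, ∀ x ∈ (p i).support, x ∈ S (c i) := fun i x hx => by rwa [hpS i]
  refine ⟨{ core := z, centre := c, leaf := f, path := p, pathLen := s
            pathLen_pos := hs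
            pathLen_lt := hsL
            path_isPath := hp
            path_length := fun i => Finset.mem_singleton.1 (hpl i)
            star_adj := fun i j => hΛ.subset_neighborSet _ (hcJ i) (hfΛ i j).1
            centre_inj := hc
            leaf_inj := fun ⟨i, j⟩ ⟨i', j'⟩ hij => ?_
            centre_ne_leaf := fun i j k hik => (hfΛ j k).2
              (hik ▸ hX _ (hcJ i) (hmem i _ (p i).end_mem_support))
            paths_disjoint := fun i j hij x hxi hxj => hS.inter_subset _ (hcJ i) _ (hcJ j)
              (hc.ne hij) ⟨hmem i x hxi, hmem j x hxj⟩
            leaf_notin_path := fun i j k hx => (hfΛ j k).2 (hX _ (hcJ i) (hmem i _ hx)) }, rfl,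
    ?_, fun i j => ⟨fun hW => ?_, (hfΛ i j).2⟩⟩
  · have hij : f i j = f i' j' := hij
    obtain rfl : i = i' := hc (hΛ.pairwiseDisjoint_leaves.elim_set (hcJ i) (hcJ i') (f i j)
      (hfΛ i j).1 (hij ▸ (hfΛ i' j').1))
    rw [hf i hij]
  · rintro x ⟨i, hx⟩
    exact Set.mem_biUnion (hcJ i) (hmem i x hx)
  · exact Set.disjoint_left.1 (hΛ.disjoint _ (hcJ i)) (Or.inr (hfΛ i j).1) hW

lemma exists_unitIn_disjoint [Finite V] (hS : IsFan G W z {s} J S) (hΛ : IsStarFamily G W J Λ q)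
    (hs : 0 < s) (hsL : s < L) (hz : z ∉ A) (hJ : h₀ + A.ncard ≤ J.ncard)
    (hq : h₁ + ((⋃ u ∈ J, S u).ncard + A.ncard) ≤ q) :
    ∃ U : UnitIn G h₀ h₁ L, U.core = z ∧ U.interior ⊆ ⋃ u ∈ J, S u ∧
      Disjoint U.verts (W ∪ A) := by
  have hKJ := Set.sep_subset J fun u => Disjoint (S u) A
  have hK := hS.ncard_le_ncard_disjoint_add hz
  obtain ⟨U, hUz, hUS, hUleaf⟩ := exists_unitIn (h₀ := h₀) (h₁ := h₁)
    (X := (⋃ u ∈ J, S u) ∪ A) (hS.mono hKJ) (hΛ.mono subset_rfl hKJ) hs hsL (by omega)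
    (fun u hu x hx => Or.inl (Set.mem_biUnion (hKJ hu) hx))
    ((Nat.add_le_add_left (Set.ncard_union_le _ _) h₁).trans hq)
  refine ⟨U, hUz, hUS.trans (Set.biUnion_subset_biUnion_left hKJ), Set.disjoint_left.2 ?_⟩
  rintro x (hx | ⟨⟨i, j⟩, rfl⟩) (hxW | hxA)
  · obtain ⟨u, hu, hxu⟩ := Set.mem_iUnion₂.1 (hUS hx)
    exact Set.disjoint_left.1 (hS.disjoint u hu.1) hxu hxW
  · obtain ⟨u, hu, hxu⟩ := Set.mem_iUnion₂.1 (hUS hx)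
    exact Set.disjoint_left.1 hu.2 hxu hxA
  · exact (hUleaf i j).1 hxW
  · exact (hUleaf i j).2 (Or.inr hxA)

end Units

namespace ExpansionSetting

variable {V : Type*} [Finite V] {G : SimpleGraph V} {d η : ℝ} {m : ℕ} {W : Set V}

lemma exists_star_disjoint (hS : ExpansionSetting G d η m) {c q : ℕ} (hc : c ≤ 148)
    {U : Set V} (hU : (U.ncard : ℝ) ≤ d * (m : ℝ) ^ c) (hq : (q : ℝ) ≤ d / 2) :
    ∃ v, ∃ T ⊆ G.neighborSet v, T.ncard = q ∧ Disjoint (insert v T) U := by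
  obtain ⟨v, hv⟩ : ∃ v, v ∉ U ∪ {x | x ∉ U ∧ d / 2 ≤ ((G.neighborSet x ∩ U).ncard : ℝ)} := by
    by_contra! hall
    have hcard : (Nat.card V : ℝ) ≤
        U.ncard + {x | x ∉ U ∧ d / 2 ≤ ((G.neighborSet x ∩ U).ncard : ℝ)}.ncard := by
      rw [← Set.ncard_univ, ← Set.eq_univ_of_forall hall]
      exact_mod_cast Set.ncard_union_le _ _
    have hmany := hS.ncard_many_neighbors_le hU
    have hn := hS.le_card
    have h₁ := hS.mul_pow_le hS.d_pos.le (show c < 300 by omega)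
    have h₂ := hS.mul_pow_le hS.d_pos.le (show 2 * c + 3 < 300 by omega)
    have := hS.d_pos.trans_le (hS.le_mul_pow 300)
    linarith
  rw [Set.mem_union, not_or] at hv
  have hfew : ((G.neighborSet v ∩ U).ncard : ℝ) < d / 2 := by
    by_contra! hmany
    exact hv.2 ⟨hv.1, hmany⟩
  have hq' : q ≤ (G.neighborSet v \ U).ncard := by
    have hsplit : ((G.neighborSet v ∩ U).ncard : ℝ) + (G.neighborSet v \ U).ncard =
        (G.neighborSet v).ncard := by
      exact_mod_cast Set.ncard_inter_add_ncard_sdiff_eq_ncard (G.neighborSet v) U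
    have hdeg := hS.minDeg v
    exact_mod_cast (by linarith : (q : ℝ) ≤ (G.neighborSet v \ U).ncard)
  obtain ⟨T, hT, hTq⟩ := Set.exists_subset_card_eq hq'
  exact ⟨v, T, hT.trans Set.sdiff_subset, hTq,
    Set.disjoint_insert_left.2 ⟨hv.1, Set.disjoint_left.2 fun x hx => (hT hx).2⟩⟩

lemma exists_isStarFamily (hS : ExpansionSetting G d η m) {c q : ℕ} (hc : c ≤ 148)
    (hq : (q : ℝ) ≤ d / 2) (N : ℕ) (hN : (W.ncard : ℝ) + N * (q + 1) ≤ d * (m : ℝ) ^ c) :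
    ∃ I Λ, I.ncard = N ∧ IsStarFamily G W I Λ q := by
  induction N with
  | zero =>
    exact ⟨∅, fun _ => ∅, Set.ncard_empty V, by simp, by simp, by simp, Set.pairwiseDisjoint_empty⟩
  | succ N ih =>
    rw [Nat.cast_succ] at hN
    obtain ⟨I, Λ, rfl, hΛ⟩ := ih (hN.trans' (by gcongr; linarith))
    have hunion : (⋃ u ∈ I, insert u (Λ u)).ncard ≤ I.ncard * (q + 1) :=
      ncard_biUnion_le_mul I.toFinite fun u hu =>
        (Set.ncard_insert_le u _).trans (by rw [hΛ.ncard_eq u hu])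
    have hU : ((W ∪ ⋃ u ∈ I, insert u (Λ u)).ncard : ℝ) ≤ d * (m : ℝ) ^ c := by
      calc ((W ∪ ⋃ u ∈ I, insert u (Λ u)).ncard : ℝ) ≤ W.ncard + I.ncard * (q + 1) := by
            exact_mod_cast (Set.ncard_union_le _ _).trans (Nat.add_le_add_left hunion _)
        _ ≤ W.ncard + (I.ncard + 1) * (q + 1) := by gcongr; linarith
        _ ≤ d * (m : ℝ) ^ c := hN
    obtain ⟨v, T, hT, hTq, hdisj⟩ := hS.exists_star_disjoint hc hU hq
    obtain ⟨hvI, Λ', hΛ'⟩ := hΛ.insert hT hTq hdisj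
    exact ⟨insert v I, Λ', Set.ncard_insert_of_notMem hvI, hΛ'⟩

section StarFamilies

variable {I I₁ I₂ R X : Set V} {Λ Λ₁ Λ₂ : V → Set V} {q q₁ q₂ : ℕ}

lemma le_ncard_leaves_sdiff (hS : ExpansionSetting G d η m) (h : IsStarFamily G W I Λ q)
    (hX : (X.ncard : ℝ) ≤ d * (m : ℝ) ^ 33) (hq : d * (m : ℝ) ^ 35 ≤ I.ncard * q) :
    d * (m : ℝ) ^ 34 ≤ ((⋃ u ∈ I, Λ u) \ X).ncard := by
  have hle : (I.ncard * q : ℝ) ≤ ((⋃ u ∈ I, Λ u) \ X).ncard + X.ncard := by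
    exact_mod_cast h.mul_le_ncard_biUnion_sdiff_add X
  have := hS.mul_pow_le hS.d_pos.le (show 33 < 34 by norm_num)
  have := hS.mul_pow_le hS.d_pos.le (show 34 < 35 by norm_num)
  have := hS.d_pos.trans_le (hS.le_mul_pow 34)
  linarith

lemma exists_path_between_stars (hS : ExpansionSetting G d η m) (h₁ : IsStarFamily G W I₁ Λ₁ q₁)
    (h₂ : IsStarFamily G (W ∪ I₁) I₂ Λ₂ q₂)
    (hX : ((W ∪ I₁ ∪ I₂ ∪ R).ncard : ℝ) ≤ d * (m : ℝ) ^ 33)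
    (hq₁ : d * (m : ℝ) ^ 35 ≤ I₁.ncard * q₁) (hq₂ : d * (m : ℝ) ^ 35 ≤ (I₂ \ R).ncard * q₂) :
    ∃ z ∈ I₁, ∃ u ∈ I₂, u ∉ R ∧ ∃ p : G.Walk z u, p.IsPath ∧
      p.length ∈ Finset.Icc 1 (2 * m + 2) ∧ ∀ x ∈ p.support, x ∉ W ∧ (x ∈ R → x = z) := by
  set X := W ∪ I₁ ∪ I₂ ∪ R
  have hA := hS.le_ncard_leaves_sdiff h₁ hX hq₁
  have hB := hS.le_ncard_leaves_sdiff (h₂.mono subset_rfl Set.sdiff_subset) hX hq₂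
  have hXm : (X.ncard : ℝ) * m ≤ d * (m : ℝ) ^ 34 :=
    (mul_le_mul_of_nonneg_right hX (Nat.cast_nonneg m)).trans_eq (by ring)
  have hdm : d * m ≤ d * (m : ℝ) ^ 34 :=
    mul_le_mul_of_nonneg_left (le_self_pow₀ hS.one_le (by norm_num)) hS.d_pos.le
  obtain ⟨a, ⟨ha, -⟩, b, ⟨hb, -⟩, p, hpl, hpX⟩ := hS.exists_walk_avoiding
    Set.disjoint_sdiff_left Set.disjoint_sdiff_left (hdm.trans hA) (hdm.trans hB)
    (by linarith) (by linarith)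
  obtain ⟨z, hz, hza⟩ := Set.mem_iUnion₂.1 ha
  obtain ⟨u, ⟨hu, huR⟩, hub⟩ := Set.mem_iUnion₂.1 hb
  replace hza : G.Adj z a := h₁.subset_neighborSet z hz hza
  replace hub : G.Adj u b := h₂.subset_neighborSet u hu hub
  have huW := h₂.centre_notMem hu
  obtain ⟨w, hwlen, hw⟩ : ∃ w : G.Walk z u, w.length ≤ 2 * m + 2 ∧
      ∀ x ∈ w.support, x = z ∨ x ∈ p.support ∨ x = u :=
    ⟨.cons hza (p.concat hub.symm), by simpa using hpl,
      by simp [SimpleGraph.Walk.support_concat]⟩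
  classical
  refine ⟨z, hz, u, hu, huR, w.bypass, w.bypass_isPath, Finset.mem_Icc.2
    ⟨Nat.one_le_iff_ne_zero.2 fun h => huW (Or.inr ?_), w.length_bypass_le_length.trans hwlen⟩,
    fun x hx => ?_⟩
  · rwa [← w.bypass.eq_of_length_eq_zero h]
  · obtain rfl | hxp | rfl := hw x (w.support_bypass_subset_support hx)
    · exact ⟨h₁.centre_notMem hz, fun _ => rfl⟩
    · have hxX := hpX x hxp
      exact ⟨fun h => hxX (.inl (.inl (.inl h))), fun h => absurd (.inr h) hxX⟩
    · exact ⟨fun h => huW (.inl h), fun h => absurd h huR⟩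

omit [Finite V] in
lemma ncard_centres_union_le (hS : ExpansionSetting G d η m)
    (hW : (W.ncard : ℝ) ≤ d * (m : ℝ) ^ 32) (hI₁ : I₁.ncard ≤ m ^ 36)
    (hI₂ : (I₂.ncard : ℝ) ≤ √d * (m : ℝ) ^ 50) (hR : (R.ncard : ℝ) ≤ √d * (m : ℝ) ^ 48) :
    ((W ∪ I₁ ∪ I₂ ∪ R).ncard : ℝ) ≤ d * (m : ℝ) ^ 33 := by
  have hunion : ((W ∪ I₁ ∪ I₂ ∪ R).ncard : ℝ) ≤ W.ncard + I₁.ncard + I₂.ncard + R.ncard := by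
    have h₁ := Set.ncard_union_le (W ∪ I₁ ∪ I₂) R
    have h₂ := Set.ncard_union_le (W ∪ I₁) I₂
    have h₃ := Set.ncard_union_le W I₁
    exact_mod_cast (by omega : (W ∪ I₁ ∪ I₂ ∪ R).ncard ≤ _)
  have hI₁d : (I₁.ncard : ℝ) ≤ d :=
    (by exact_mod_cast hI₁ : (I₁.ncard : ℝ) ≤ (m : ℝ) ^ 36).trans (hS.pow_le_d (by norm_num))
  have hI₂d := hS.sqrt_mul_pow_le (show 50 ≤ 100 by norm_num)
  have hRd := hS.sqrt_mul_pow_le (show 48 ≤ 100 by norm_num)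
  have := hS.le_mul_pow 32
  have := hS.mul_pow_le hS.d_pos.le (show 32 < 33 by norm_num)
  linarith [hS.d_pos]

lemma le_ncard_centres_sdiff_mul (hS : ExpansionSetting G d η m)
    (hI₂ : √d * (m : ℝ) ^ 49 ≤ I₂.ncard) (hq₂ : √d * (m : ℝ) ^ 23 ≤ q₂)
    (hR : (R.ncard : ℝ) ≤ √d * (m : ℝ) ^ 48) :
    d * (m : ℝ) ^ 35 ≤ (I₂ \ R).ncard * q₂ := by
  have hsdiff : (I₂.ncard : ℝ) ≤ (I₂ \ R).ncard + R.ncard := by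
    exact_mod_cast Set.ncard_le_ncard_sdiff_add_ncard I₂ R
  have hgrow := hS.mul_pow_le (Real.sqrt_nonneg d) (show 48 < 49 by norm_num)
  calc d * (m : ℝ) ^ 35 ≤ d * (m : ℝ) ^ 71 :=
        mul_le_mul_of_nonneg_left (pow_le_pow_right₀ hS.one_le (by norm_num)) hS.d_pos.le
    _ = √d * √d * (m : ℝ) ^ 71 := by rw [Real.mul_self_sqrt hS.d_pos.le]
    _ = √d * (m : ℝ) ^ 48 * (√d * (m : ℝ) ^ 23) := by ring
    _ ≤ (I₂ \ R).ncard * q₂ := by gcongr; linarith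

lemma exists_isFan_of_isStarFamily (hS : ExpansionSetting G d η m)
    (hW : (W.ncard : ℝ) ≤ d * (m : ℝ) ^ 32) (h₁ : IsStarFamily G W I₁ Λ₁ q₁)
    (h₂ : IsStarFamily G (W ∪ I₁) I₂ Λ₂ q₂) (hI₁ : I₁.ncard ≤ m ^ 36)
    (hq₁ : d * (m : ℝ) ^ 35 ≤ I₁.ncard * q₁) (hI₂ : √d * (m : ℝ) ^ 49 ≤ I₂.ncard)
    (hI₂' : (I₂.ncard : ℝ) ≤ √d * (m : ℝ) ^ 50) (hq₂ : √d * (m : ℝ) ^ 23 ≤ q₂) {H : ℕ}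
    (hH : (H : ℝ) ≤ √d * (m : ℝ) ^ 9) :
    ∃ z, ∃ J ⊆ I₂, ∃ S, IsFan G W z (Finset.Icc 1 (2 * m + 2)) J S ∧ H ≤ J.ncard := by
  choose J hJ S hfan hmax using
    fun z => exists_maximal_isFan G W z (Finset.Icc 1 (2 * m + 2)) I₂
  by_contra! hcon
  set R := ⋃ z ∈ I₁, ⋃ u ∈ J z, S z u
  have hRcard : (R.ncard : ℝ) ≤ √d * (m : ℝ) ^ 48 := by
    have hle : R.ncard ≤ m ^ 36 * (H * (2 * m + 3)) :=
      (ncard_biUnion_le_mul I₁.toFinite fun z _ =>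
        ((hfan z).ncard_biUnion_le fun l hl => (Finset.mem_Icc.1 hl).2).trans
          (Nat.mul_le_mul_right _ (hcon z (J z) (hJ z) (S z) (hfan z)).le)).trans
        (Nat.mul_le_mul_right _ hI₁)
    have hm : (2 * m + 3 : ℝ) ≤ (m : ℝ) ^ 3 := by
      have := hS.thousand_le
      have := hS.mul_pow_le zero_le_one (show 1 < 3 by norm_num)
      linarith
    calc (R.ncard : ℝ) ≤ (m : ℝ) ^ 36 * (H * (2 * m + 3)) := by exact_mod_cast hle
      _ ≤ (m : ℝ) ^ 36 * (√d * (m : ℝ) ^ 9 * (m : ℝ) ^ 3) := by gcongr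
      _ = √d * (m : ℝ) ^ 48 := by ring
  obtain ⟨z, hz, u, hu, huR, p, hp, hpL, hpWR⟩ :=
    hS.exists_path_between_stars (R := R) h₁ h₂
      (hS.ncard_centres_union_le hW hI₁ hI₂' hRcard) hq₁
      (hS.le_ncard_centres_sdiff_mul hI₂ hq₂ hRcard)
  have hmem : ∀ w ∈ J z, S z w ⊆ R := fun w hw =>
    (Set.subset_biUnion_of_mem (u := S z) hw).trans
      (Set.subset_biUnion_of_mem (u := fun z => ⋃ u ∈ J z, S z u) hz)
  obtain ⟨w, hw, x, hxp, hxw, hxz⟩ := hmax z u hu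
    (fun huJ => huR (hmem u huJ ((hfan z).right_mem huJ))) p hp hpL fun x hx => (hpWR x hx).1
  exact hxz ((hpWR x hxp).2 (hmem w hw hxw))

end StarFamilies

omit [Finite V] in
lemma ceil_sqrt_mul_pow_add_one_le (hS : ExpansionSetting G d η m) {a b : ℕ} (hab : a < b) :
    (⌈√d * (m : ℝ) ^ a⌉₊ : ℝ) + 1 ≤ √d * (m : ℝ) ^ b := by
  have hone : 1 ≤ √d * (m : ℝ) ^ a := one_le_mul_of_one_le_of_one_le
    ((pow_zero (m : ℝ)).symm.trans_le (hS.pow_le_sqrt (Nat.zero_le 100)))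
    (one_le_pow₀ hS.one_le)
  have hceil := Nat.ceil_lt_add_one (zero_le_one.trans hone)
  have hgrow := hS.mul_pow_le (Real.sqrt_nonneg d) hab
  linarith

lemma exists_isStarFamily_of_half_degree (hS : ExpansionSetting G d η m)
    (hW : (W.ncard : ℝ) ≤ d * (m : ℝ) ^ 32) :
    ∃ I Λ q, IsStarFamily G W I Λ q ∧ I.ncard = m ^ 36 ∧ d * (m : ℝ) ^ 35 ≤ I.ncard * q := by
  have hd : 1000 ≤ d := hS.thousand_le.trans
    ((le_self_pow₀ hS.one_le (by norm_num)).trans (hS.pow_le_d le_rfl))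
  have hfloor : (⌊d / 2⌋₊ : ℝ) ≤ d / 2 := Nat.floor_le (by linarith)
  have hfloor' : d / 4 ≤ ⌊d / 2⌋₊ := by linarith [Nat.lt_floor_add_one (d / 2)]
  obtain ⟨I, Λ, hI, hΛ⟩ := hS.exists_isStarFamily (W := W) (c := 37) (by norm_num) hfloor (m ^ 36)
    (by
      have h₁ := hS.mul_pow_le hS.d_pos.le (show 32 < 37 by norm_num)
      have h₂ := hS.mul_pow_le hS.d_pos.le (show 36 < 37 by norm_num)
      have h₃ : ((m ^ 36 : ℕ) : ℝ) * (⌊d / 2⌋₊ + 1) ≤ d * (m : ℝ) ^ 36 := by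
        rw [Nat.cast_pow, mul_comm d]
        gcongr
        linarith
      linarith)
  refine ⟨I, Λ, _, hΛ, hI, ?_⟩
  calc d * (m : ℝ) ^ 35 ≤ d / 4 * (m : ℝ) ^ 36 := by
        linarith [hS.mul_pow_le hS.d_pos.le (show 35 < 36 by norm_num), hS.d_pos,
          hS.le_mul_pow 35]
    _ ≤ ⌊d / 2⌋₊ * (m : ℝ) ^ 36 := by gcongr
    _ = I.ncard * ⌊d / 2⌋₊ := by rw [hI, Nat.cast_pow, mul_comm]

lemma exists_isStarFamily_of_sqrt_degree (hS : ExpansionSetting G d η m)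
    (hW : (W.ncard : ℝ) ≤ d * (m : ℝ) ^ 33) :
    ∃ I Λ, IsStarFamily G W I Λ ⌈√d * (m : ℝ) ^ 23⌉₊ ∧ √d * (m : ℝ) ^ 49 ≤ I.ncard ∧
      (I.ncard : ℝ) ≤ √d * (m : ℝ) ^ 50 := by
  have hcentres := hS.ceil_sqrt_mul_pow_add_one_le (show 49 < 50 by norm_num)
  have hleaves := hS.ceil_sqrt_mul_pow_add_one_le (show 23 < 24 by norm_num)
  obtain ⟨I, Λ, hI, hΛ⟩ := hS.exists_isStarFamily (W := W) (c := 75) (by norm_num)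
    (q := ⌈√d * (m : ℝ) ^ 23⌉₊) (by
      have h₁ := hS.mul_pow_le (Real.sqrt_nonneg d) (show 24 < 25 by norm_num)
      have h₂ := hS.sqrt_mul_pow_le (show 25 ≤ 100 by norm_num)
      linarith) ⌈√d * (m : ℝ) ^ 49⌉₊ (by
      have h₁ := hS.mul_pow_le hS.d_pos.le (show 33 < 75 by norm_num)
      have h₂ := hS.mul_pow_le hS.d_pos.le (show 74 < 75 by norm_num)
      have h₃ : (⌈√d * (m : ℝ) ^ 49⌉₊ : ℝ) * (⌈√d * (m : ℝ) ^ 23⌉₊ + 1) ≤ d * (m : ℝ) ^ 74 := by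
        calc _ ≤ √d * (m : ℝ) ^ 50 * (√d * (m : ℝ) ^ 24) := by gcongr; linarith
          _ = √d * √d * (m : ℝ) ^ 74 := by ring
          _ = d * (m : ℝ) ^ 74 := by rw [Real.mul_self_sqrt hS.d_pos.le]
      linarith)
  exact ⟨I, Λ, hΛ, hI ▸ Nat.le_ceil _, by rw [hI]; linarith⟩

lemma exists_isFan_isStarFamily (hS : ExpansionSetting G d η m)
    (hW : (W.ncard : ℝ) ≤ d * (m : ℝ) ^ 32) {k : ℕ} (hk : (k : ℝ) ≤ √d * (m : ℝ) ^ 7) :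
    ∃ s z J S Λ, 0 < s ∧ s < 10 * m ∧ IsFan G W z {s} J S ∧
      IsStarFamily G W J Λ ⌈√d * (m : ℝ) ^ 23⌉₊ ∧ J.ncard = k := by
  obtain ⟨I₁, Λ₁, q, h₁, hI₁, hq⟩ := hS.exists_isStarFamily_of_half_degree hW
  obtain ⟨I₂, Λ₂, h₂, hI₂, hI₂'⟩ := hS.exists_isStarFamily_of_sqrt_degree (W := W ∪ I₁) (by
    have hunion : ((W ∪ I₁).ncard : ℝ) ≤ W.ncard + (m : ℝ) ^ 36 := by
      exact_mod_cast hI₁ ▸ Set.ncard_union_le W I₁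
    have := hS.pow_le_d (show 36 ≤ 200 by norm_num)
    have := hS.le_mul_pow 32
    have := hS.mul_pow_le hS.d_pos.le (show 32 < 33 by norm_num)
    linarith [hS.d_pos])
  have hH : (((2 * m + 2) * k : ℕ) : ℝ) ≤ √d * (m : ℝ) ^ 9 := by
    have hm : (2 * m + 2 : ℝ) ≤ (m : ℝ) ^ 2 := by
      linarith [hS.thousand_le, hS.mul_pow_le zero_le_one (show 1 < 2 by norm_num)]
    calc (((2 * m + 2) * k : ℕ) : ℝ) = (2 * m + 2) * k := by push_cast; rfl
      _ ≤ (m : ℝ) ^ 2 * (√d * (m : ℝ) ^ 7) := by gcongr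
      _ = √d * (m : ℝ) ^ 9 := by ring
  obtain ⟨z, J, hJ, S, hfan, hJk⟩ :=
    hS.exists_isFan_of_isStarFamily hW h₁ h₂ hI₁.le hq hI₂ hI₂' (Nat.le_ceil _) hH
  obtain ⟨s, hs, K, hKJ, hK, hfanK⟩ := hfan.exists_length_eq (Finset.nonempty_Icc.2 (by omega))
    (k := k) (by rwa [Nat.card_Icc, Nat.add_sub_cancel])
  have hs' := Finset.mem_Icc.1 hs
  have := hS.le_m
  exact ⟨s, z, K, S, Λ₂, hs'.1, by omega, hfanK,
    h₂.mono Set.subset_union_left (hKJ.trans hJ), hK⟩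

end ExpansionSetting

lemma exists_adjusterIn {V : Type*} {G : SimpleGraph V} {d z : ℝ} {m l k ℓ : ℕ} {A : Set V}
    (hz : 1 ≤ z) (hz' : z ≤ 3)
    (U₁ U₂ : UnitIn G ⌈z * √d * (m : ℝ) ^ 6⌉₊ ⌈√d * (m : ℝ) ^ 22⌉₊ (10 * m))
    (hU : Disjoint U₁.interior U₂.interior) (hA : IsPathBundle G U₁.core U₂.core l k A)
    (hcard : (A \ {U₁.core, U₂.core}).ncard ≤ 2 * ℓ)
    (hdisj : Disjoint (A \ {U₁.core, U₂.core}) (U₁.verts ∪ U₂.verts)) (hl : l ≤ ℓ) :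
    ∃ P : AdjusterIn G d m ℓ k, P.z = z ∧
      P.verts = A \ {U₁.core, U₂.core} ∪ U₁.verts ∪ U₂.verts ∧ P.len = l + 2 * k := by
  choose p hp hpl hpA using hA
  exact ⟨{ z := z
           z_ge := hz
           z_le := hz'
           F₁ := U₁
           F₂ := U₂
           int_disj := hU.inter_eq
           A := A \ {U₁.core, U₂.core}
           A_card := hcard
           A_disj := hdisj.inter_eq
           l' := l
           l'_le := hl
           paths := fun i => p i i.is_le
           paths_isPath := fun i => hp i i.is_le
           paths_length := fun i => hpl i i.is_le
           paths_support := fun i x hx => by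
            rw [Set.sdiff_union_self]
            exact Or.inl (hpA i i.is_le x hx) }, rfl, rfl, rfl⟩

namespace ExpansionSetting

variable {V : Type*} [Finite V] {G : SimpleGraph V} {d η : ℝ} {m : ℕ} {W : Set V}

omit [Finite V] in
lemma two_hundred_mul_cube_le_sqrt (hS : ExpansionSetting G d η m) :
    (200 * m ^ 3 : ℝ) ≤ √d := by
  have h₀ : 0 ≤ 1 * (m : ℝ) ^ 3 := by positivity
  linarith [hS.mul_pow_le zero_le_one (show 3 < 4 by norm_num),
    hS.pow_le_sqrt (show 4 ≤ 100 by norm_num)]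

lemma ncard_biUnion_fan_le (hS : ExpansionSetting G d η m) {s : ℕ} {z : V} {J : Set V}
    {S : V → Set V} (hfan : IsFan G W z {s} J S) (hs : s < 10 * m)
    (hJ : (J.ncard : ℝ) ≤ √d * (m : ℝ) ^ 7) :
    ((⋃ u ∈ J, S u).ncard : ℝ) ≤ √d * (m : ℝ) ^ 9 := by
  have hle : (⋃ u ∈ J, S u).ncard ≤ J.ncard * (s + 1) :=
    hfan.ncard_biUnion_le fun l hl => (Finset.mem_singleton.1 hl).le
  have hs' : (s + 1 : ℝ) ≤ (m : ℝ) ^ 2 := by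
    have hm := hS.thousand_le
    have : (s + 1 : ℝ) ≤ 10 * m := by exact_mod_cast hs
    nlinarith
  calc ((⋃ u ∈ J, S u).ncard : ℝ) ≤ J.ncard * (s + 1) := by exact_mod_cast hle
    _ ≤ √d * (m : ℝ) ^ 7 * (m : ℝ) ^ 2 := by gcongr
    _ = √d * (m : ℝ) ^ 9 := by ring

lemma exists_unitIn_avoiding (hS : ExpansionSetting G d η m)
    (hW : (W.ncard : ℝ) ≤ d * (m : ℝ) ^ 32) :
    ∃ z, ∃ Y : Set V, z ∈ Y ∧ Disjoint Y W ∧ (Y.ncard : ℝ) ≤ √d * (m : ℝ) ^ 9 ∧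
      ∀ A : Set V, z ∉ A → A.ncard ≤ 200 * m ^ 3 →
        ∃ U : UnitIn G ⌈2 * √d * (m : ℝ) ^ 6⌉₊ ⌈√d * (m : ℝ) ^ 22⌉₊ (10 * m),
          U.core = z ∧ U.interior ⊆ Y ∧ Disjoint U.verts (W ∪ A) := by
  have hsmall := hS.two_hundred_mul_cube_le_sqrt
  have hone : 1 ≤ √d := by simpa using hS.pow_le_sqrt (Nat.zero_le 100)
  have hsqrt : ∀ a, √d ≤ √d * (m : ℝ) ^ a := fun a =>
    le_mul_of_one_le_right (Real.sqrt_nonneg d) (one_le_pow₀ hS.one_le)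
  have hgrow : ∀ {a b}, a < b → 1000 * (√d * (m : ℝ) ^ a) ≤ √d * (m : ℝ) ^ b :=
    hS.mul_pow_le (Real.sqrt_nonneg d)
  have hk : ((⌈2 * √d * (m : ℝ) ^ 6⌉₊ + 200 * m ^ 3 : ℕ) : ℝ) ≤ √d * (m : ℝ) ^ 7 := by
    have hceil := Nat.ceil_lt_add_one (show 0 ≤ 2 * √d * (m : ℝ) ^ 6 by positivity)
    push_cast
    linarith [hgrow (show 6 < 7 by norm_num), hsqrt 6]
  obtain ⟨s, z, J, S, Λ, hs, hsm, hfan, hstar, hJ⟩ := hS.exists_isFan_isStarFamily hW hk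
  have hY := hS.ncard_biUnion_fan_le hfan hsm (hJ ▸ hk)
  refine ⟨z, ⋃ u ∈ J, S u, ?_, Set.disjoint_iUnion₂_left.2 hfan.disjoint, hY,
    fun A hzA hA => exists_unitIn_disjoint hfan hstar hs hsm hzA (by omega) ?_⟩
  · have hpos : 0 < J.ncard := hJ ▸ Nat.add_pos_right _ (by have := hS.le_m; positivity)
    obtain ⟨u, hu⟩ := (Set.ncard_pos (Set.toFinite J)).1 hpos
    exact Set.mem_biUnion hu (hfan.left_mem hu)
  · have hA' : (A.ncard : ℝ) ≤ √d :=
      (by exact_mod_cast hA : (A.ncard : ℝ) ≤ 200 * m ^ 3).trans hsmall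
    have hceil := Nat.ceil_lt_add_one (show 0 ≤ √d * (m : ℝ) ^ 22 by positivity)
    have hq := Nat.le_ceil (√d * (m : ℝ) ^ 23)
    have hgoal : (⌈√d * (m : ℝ) ^ 22⌉₊ + ((⋃ u ∈ J, S u).ncard + A.ncard) : ℝ) ≤
        ⌈√d * (m : ℝ) ^ 23⌉₊ := by
      linarith [hgrow (show 9 < 22 by norm_num), hgrow (show 22 < 23 by norm_num), hsqrt 9]
    exact_mod_cast hgoal

lemma exists_adjuster_avoiding (hS : ExpansionSetting G d η m)
    (hW : (W.ncard : ℝ) ≤ d * (m : ℝ) ^ 10) :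
    ∃ P : AdjusterIn G d m (100 * m ^ 3) (m ^ 2), P.z = 2 ∧ (∀ x ∈ P.verts, x ∉ W) ∧
      80 * m ^ 3 ≤ P.len ∧ P.len ≤ 80 * m ^ 3 + 80 * m := by
  set W₁ := W ∪ {v | v ∉ W ∧ ¬ IsRobust G d m 10 W v}
  have hrobust : ∀ v ∉ W₁, IsRobust G d m 10 W v := fun v hv => by
    by_contra hvr
    exact hv (Or.inr ⟨fun hvW => hv (Or.inl hvW), hvr⟩)
  have hW₁ : (W₁.ncard : ℝ) ≤ d * (m : ℝ) ^ 31 := by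
    have hunion : (W₁.ncard : ℝ) ≤ W.ncard + {v | v ∉ W ∧ ¬ IsRobust G d m 10 W v}.ncard := by
      exact_mod_cast Set.ncard_union_le W _
    have hbad : ({v | v ∉ W ∧ ¬ IsRobust G d m 10 W v}.ncard : ℝ) ≤ d * (m : ℝ) ^ 30 :=
      hS.ncard_not_isRobust_le (by norm_num) hW
    linarith [hS.d_pos, hS.le_mul_pow 30,
      hS.mul_pow_le hS.d_pos.le (show 10 < 30 by norm_num),
      hS.mul_pow_le hS.d_pos.le (show 30 < 31 by norm_num)]
  have hgrow := hS.mul_pow_le hS.d_pos.le (show 31 < 32 by norm_num)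
  have hd := hS.d_pos.trans_le (hS.le_mul_pow 31)
  obtain ⟨z₁, Y₁, hz₁, hY₁, hY₁card, hunit₁⟩ := hS.exists_unitIn_avoiding (W := W₁)
    (by linarith)
  obtain ⟨z₂, Y₂, hz₂, hY₂, -, hunit₂⟩ := hS.exists_unitIn_avoiding (W := W₁ ∪ Y₁) (by
    have hunion : ((W₁ ∪ Y₁).ncard : ℝ) ≤ W₁.ncard + Y₁.ncard := by
      exact_mod_cast Set.ncard_union_le W₁ Y₁
    linarith [hS.sqrt_mul_pow_le (show 9 ≤ 100 by norm_num), hS.le_mul_pow 31])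
  rw [Set.disjoint_union_right] at hY₂
  obtain ⟨l, A, hA, hl, hl', hAcard, hAW⟩ := hS.exists_isPathBundle_sq (by norm_num) hW
    (hrobust z₁ (Set.disjoint_left.1 hY₁ hz₁)) (hrobust z₂ (Set.disjoint_left.1 hY₂.1 hz₂))
    (fun h : z₁ = z₂ => Set.disjoint_left.1 hY₂.2 hz₂ (h ▸ hz₁))
  have hA' : (A \ {z₁, z₂}).ncard ≤ 200 * m ^ 3 :=
    (Set.ncard_le_ncard Set.sdiff_subset).trans hAcard
  obtain ⟨U₁, rfl, hU₁, hdisj₁⟩ := hunit₁ (A \ {z₁, z₂}) (by simp) hA'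
  obtain ⟨U₂, rfl, hU₂, hdisj₂⟩ := hunit₂ (A \ {U₁.core, z₂}) (by simp) hA'
  rw [Set.disjoint_union_right] at hdisj₁ hdisj₂
  have := hS.le_m
  obtain ⟨P, hPz, hP, hPlen⟩ := exists_adjusterIn (ℓ := 100 * m ^ 3) one_le_two (by norm_num) U₁ U₂
    (hY₂.2.symm.mono hU₁ hU₂) hA (by omega)
    (Set.disjoint_union_right.2 ⟨hdisj₁.2.symm, hdisj₂.2.symm⟩) (by nlinarith)
  refine ⟨P, hPz, Set.disjoint_left.1 ?_, hPlen ▸ hl, hPlen ▸ hl'⟩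
  rw [hP, Set.disjoint_union_left, Set.disjoint_union_left]
  exact ⟨⟨hAW.mono_left Set.sdiff_subset, hdisj₁.1.mono_right Set.subset_union_left⟩,
    hdisj₂.1.mono_right (Set.subset_union_left.trans Set.subset_union_left)⟩

end ExpansionSetting

section Thresholds

variable {eps1 eps2 : ℝ} {V : Type*} {G : SimpleGraph V}

/-- Sublinear expansion without robustness: the expansion condition of `IsExpander` for `F = ⊥`
only. -/
def IsVertexExpander (G : SimpleGraph V) (eps1 k : ℝ) : Prop :=
  ∀ X : Set V, k / 2 ≤ (X.ncard : ℝ) → (X.ncard : ℝ) ≤ (Nat.card V : ℝ) / 2 →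
    epsFun eps1 k X.ncard * X.ncard ≤ ((extNbr G X).ncard : ℝ)

lemma epsFun_nonneg (heps1 : 0 ≤ eps1) (k x : ℝ) : 0 ≤ epsFun eps1 k x := by
  unfold epsFun
  split_ifs
  exacts [le_rfl, by positivity]

lemma IsExpander.isVertexExpander {k : ℝ} (h : IsExpander G eps1 k) (heps1 : 0 ≤ eps1) :
    IsVertexExpander G eps1 k := by
  intro X hkX hXn
  have havg : 0 ≤ avgDeg G :=
    div_nonneg (finsum_nonneg fun v => Nat.cast_nonneg _) (Nat.cast_nonneg _)
  have hbot := h X hkX hXn ⊥ bot_le (by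
    rw [SimpleGraph.edgeSet_bot, Set.ncard_empty, Nat.cast_zero]
    exact mul_nonneg (mul_nonneg havg (epsFun_nonneg heps1 _ _)) (Nat.cast_nonneg _))
  rwa [sdiff_bot] at hbot

lemma div_sq_le_epsFun (heps1 : 0 ≤ eps1) {k x M : ℝ} (hk : 0 < k) (hx : k ≤ x)
    (hM : Real.log (15 * x / k) ≤ M) : eps1 / M ^ 2 ≤ epsFun eps1 k x := by
  have hlog : 0 < Real.log (15 * x / k) := Real.log_pos (by rw [lt_div_iff₀ hk]; linarith)
  rw [epsFun, if_neg (by linarith)]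
  gcongr

lemma IsVertexExpander.mul_ncard_le {d L : ℝ} (h : IsVertexExpander G eps1 (eps2 * d))
    (heps1 : 0 ≤ eps1) (heps2 : 0 < eps2) (hd : 0 < d) (hL : Real.log (15 / eps2) ≤ L)
    (hn : (Nat.card V : ℝ) ≤ d * Real.exp L) {X : Set V} (hX : eps2 * d ≤ X.ncard)
    (hXn : (X.ncard : ℝ) ≤ (Nat.card V : ℝ) / 2) :
    eps1 / (2 * L) ^ 2 * X.ncard ≤ ((extNbr G X).ncard : ℝ) := by
  have hk : 0 < eps2 * d := mul_pos heps2 hd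
  have hX₀ : (0 : ℝ) < X.ncard := hk.trans_le hX
  have hlog : Real.log (15 * X.ncard / (eps2 * d)) ≤ 2 * L :=
    calc Real.log (15 * X.ncard / (eps2 * d)) ≤ Real.log (15 / eps2 * Real.exp L) := by
          refine Real.log_le_log (by positivity) ?_
          rw [div_le_iff₀ hk]
          calc 15 * (X.ncard : ℝ) ≤ 15 * (d * Real.exp L) := by linarith
            _ = 15 / eps2 * Real.exp L * (eps2 * d) := by field_simp
      _ = Real.log (15 / eps2) + L := by
          rw [Real.log_mul (by positivity) (Real.exp_ne_zero L), Real.log_exp]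
      _ ≤ 2 * L := by linarith
  exact (mul_le_mul_of_nonneg_right (div_sq_le_epsFun heps1 hk hX hlog) hX₀.le).trans
    (h X (by linarith) hXn)

lemma exp_le_one_add_pow {x y : ℝ} {k : ℕ} (hx : 0 ≤ x) (hx' : x ≤ 1) (hy : y ≤ k * (x / 2)) :
    Real.exp y ≤ (1 + x) ^ k := by
  have hlog : x / 2 ≤ Real.log (1 + x) :=
    calc x / 2 ≤ 2 * x / (x + 2) := by
          rw [div_le_div_iff₀ two_pos (by linarith)]
          nlinarith
      _ ≤ Real.log (1 + x) := Real.le_log_one_add_of_nonneg hx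
  rw [← Real.le_log_iff_exp_le (by positivity), Real.log_pow]
  exact hy.trans (by gcongr)

lemma IsVertexExpander.expansionSetting {d L : ℝ} {m : ℕ} (h : IsVertexExpander G eps1 (eps2 * d))
    (heps1 : 0 < eps1) (heps2 : 0 < eps2) (hd : 0 < d) (hn : Nat.card V = d * Real.exp L)
    (hm : m = ⌊L ^ 4⌋₊) (hL : 1001 ≤ L) (hexp : L ^ 1200 ≤ Real.exp L) (hL₁ : eps1 ≤ L)
    (hL₁' : 64 ≤ eps1 * L) (hL₂ : eps2 ≤ L) (hlog : Real.log (15 / eps2) ≤ L)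
    (hmd : (m : ℝ) ^ 200 ≤ d) (hbip : IsBipartite G) (hdeg : minDegGe G d)
    (hTK : ¬ HasTK G ⌈√d * m⌉₊ 1) : ExpansionSetting G d (eps1 / (2 * L) ^ 2) m := by
  have : 0 < L := by linarith
  have hL4 : L ^ 2 ≤ L ^ 4 := pow_le_pow_right₀ (by linarith) (by norm_num)
  have hmL : (m : ℝ) ≤ L ^ 4 := hm ▸ Nat.floor_le (by positivity)
  have hmL' : L ^ 4 - 1 < m := by linarith [hm ▸ Nat.lt_floor_add_one (L ^ 4)]
  have hLm : L ≤ m := by nlinarith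
  have hm₁ : 1000 ≤ m := by exact_mod_cast (by linarith : (1000 : ℝ) ≤ m)
  refine ⟨hm₁, hmd, ?_, ?_, ?_, fun X hX hXn => h.mul_ncard_le heps1.le heps2 hd hlog hn.le ?_ hXn,
    hdeg, hbip, hTK⟩
  · calc d * (m : ℝ) ^ 300 ≤ d * (L ^ 4) ^ 300 := by gcongr
      _ = d * L ^ 1200 := by rw [← pow_mul]
      _ ≤ Nat.card V := by rw [hn]; gcongr
  · calc (8 : ℝ) ≤ eps1 * L * L / 8 := by nlinarith
      _ = eps1 / (2 * L) ^ 2 * (L ^ 4 / 2) := by field_simp; norm_num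
      _ ≤ eps1 / (2 * L) ^ 2 * m := by gcongr; linarith
  · rw [hn]
    gcongr
    refine exp_le_one_add_pow (by positivity) ?_ ?_
    · rw [div_div, div_le_one (by positivity)]
      nlinarith
    · rw [Nat.cast_sub (by omega), Nat.cast_one]
      calc L ≤ eps1 * L * L / 64 := by nlinarith
        _ = L ^ 4 / 2 * (eps1 / (2 * L) ^ 2 / 4 / 2) := by field_simp; norm_num
        _ ≤ (m - 1) * (eps1 / (2 * L) ^ 2 / 4 / 2) := by gcongr; linarith
  · rw [mul_comm] at hX
    exact hX.trans' (by gcongr; linarith)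

lemma eventually_pow_le_exp (k : ℕ) : ∀ᶠ L : ℝ in Filter.atTop, L ^ k ≤ Real.exp L := by
  filter_upwards [(Real.isLittleO_pow_exp_atTop (n := k)).bound one_pos] with L hL
  rw [one_mul, Real.norm_eq_abs, Real.norm_eq_abs, Real.abs_exp] at hL
  exact (le_abs_self _).trans hL

end Thresholds

theorem statement_14_general {eps1 eps2 : ℝ} (heps1 : 0 < eps1) (heps2 : 0 < eps2) :
    ∃ K₀ : ℝ, ∀ K : ℝ, K₀ ≤ K →
      ∀ (V : Type*) [Finite V] (G : SimpleGraph V) (n : ℕ) (d : ℝ) (m : ℕ),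
        Nat.card V = n → 0 < d → IsBipartite G → IsVertexExpander G eps1 (eps2 * d) →
        minDegGe G d → K * d ≤ n → m = ⌊Real.log (n / d) ^ 4⌋₊ → (m : ℝ) ^ 200 ≤ d →
        ¬ HasTK G ⌈√d * m⌉₊ 1 →
        ∀ W : Set V, W.ncard ≤ d * (m : ℝ) ^ 10 →
        ∃ P : AdjusterIn G d m (100 * m ^ 3) (m ^ 2),
          P.z = 2 ∧ (∀ x ∈ P.verts, x ∉ W) ∧
          80 * m ^ 3 ≤ P.len ∧ P.len ≤ 80 * m ^ 3 + 80 * m := by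
  obtain ⟨L₀, hL₀⟩ := Filter.eventually_atTop.1 ((Filter.eventually_ge_atTop 1001).and
    ((eventually_pow_le_exp 1200).and ((Filter.eventually_ge_atTop eps1).and
      ((Filter.eventually_ge_atTop (64 / eps1)).and ((Filter.eventually_ge_atTop eps2).and
        (Filter.eventually_ge_atTop (Real.log (15 / eps2))))))))
  refine ⟨Real.exp L₀, fun K hK V _ G n d m hn hd hbip hexp hdeg hKn hm hmd hTK W hW => ?_⟩
  have hnd : Real.exp L₀ ≤ n / d := hK.trans ((le_div_iff₀ hd).2 hKn)
  have hnd₀ : 0 < n / d := (Real.exp_pos L₀).trans_le hnd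
  have hcard : (Nat.card V : ℝ) = d * Real.exp (Real.log (n / d)) := by
    rw [Real.exp_log hnd₀, hn, mul_div_cancel₀ _ hd.ne']
  obtain ⟨hL, hpow, h₁, h₁', h₂, hlog⟩ := hL₀ _ ((Real.le_log_iff_exp_le hnd₀).2 hnd)
  exact (hexp.expansionSetting heps1 heps2 hd hcard hm hL hpow h₁ ((div_le_iff₀' heps1).1 h₁') h₂
    hlog hmd hbip hdeg hTK).exists_adjuster_avoiding hW

theorem statement_14 (eps1 eps2 : Real)
    (heps1 : 0 < eps1) (heps1' : eps1 < 1) (heps2 : 0 < eps2) (heps2' : eps2 < 1) :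
    ∃ K₀ : Real, ∀ K : Real, K₀ ≤ K →
      ∀ (V : Type) [Fintype V] (G : SimpleGraph V) (n : Nat) (d : Real) (m : Nat),
        Nat.card V = n → 0 < d → IsBipartite G → IsExpander G eps1 (eps2 * d) →
        minDegGe G d → K * d ≤ (n : Real) → m = ⌊Real.log ((n : Real) / d) ^ 4⌋₊ →
        (m : Real) ^ 200 ≤ d →
        ¬ HasTK G ⌈Real.sqrt d * (m : Real)⌉₊ 1 →
        ∀ W : Set V, (W.ncard : Real) ≤ d * (m : Real) ^ 10 →
        ∃ P : AdjusterIn G d m (100 * m ^ 3) (m ^ 2),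
          P.z = 2 ∧ (∀ x ∈ P.verts, x ∉ W) ∧
          80 * m ^ 3 ≤ P.len ∧ P.len ≤ 80 * m ^ 3 + 80 * m :=
  let ⟨K₀, hK₀⟩ := statement_14_general heps1 heps2
  ⟨K₀, fun K hK V _ G n d m hn hd hbip hexp =>
    hK₀ K hK V G n d m hn hd hbip (hexp.isVertexExpander heps1.le)⟩
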